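/- arXiv:1807.08321 — 8 statements merged into one kernel-verified Lean document; each statement's English description precedes it below -/
import Mathlib

section
/- Let Σ be a finite ordered alphabet and let w : ℕ → Σ be an infinite word that is recurrent and aperiodic. Let u and v be two factors of w. Then it cannot happen that there exist m, n ∈ ℕ such that σ^m(w) is the lexicographically greatest element of {z ∈ L_w : u is a prefix of z} and σ^n(w) is the lexicographically least element of {z ∈ L_w : v is a prefix of z}. -/
/-!
Suppose `σ^m(w)` is the greatest element with prefix `u` and `σ^n(w)` the least with prefix `v`.
By recurrence, a window of `w` that starts at `min m n` and covers the occurrence of `u` at `m` and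
that of `v` at `n` reappears some `d > 0` letters later. Then `σ^(m+d)(w)` starts with `u` and
`σ^(n+d)(w)` starts with `v`, so `σ^(m+d)(w) ≤ σ^m(w)` and `σ^(n+d)(w) ≥ σ^n(w)`. Equality in either
makes `w` ultimately periodic. If both inequalities are strict, then both are decided at the first
position past the window where `w` differs from its shift by `d`, which would have to be a descent
and an ascent at once.
-/

/-- The factor `w[i..i+l-1]` of an infinite word, as a list. -/
def seg {α : Type*} (w : ℕ → α) (i l : ℕ) : List α :=
  (List.range l).map fun k => w (i + k)

/-- The finite word `u` occurs in `w` at position `i`. -/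
def occursAt {α : Type*} (u : List α) (w : ℕ → α) (i : ℕ) : Prop :=
  u = seg w i u.length

/-- `u` is a factor of the infinite word `w`. -/
def IsFactor {α : Type*} (u : List α) (w : ℕ → α) : Prop :=
  ∃ i, occursAt u w i

/-- The shift, erasing the first letter. -/
def shift {α : Type*} (w : ℕ → α) : ℕ → α := fun n => w (n + 1)

/-- Strict lexicographic order on infinite words. -/
def lexLt {α : Type*} [LinearOrder α] (u v : ℕ → α) : Prop :=
  ∃ n, (∀ k < n, u k = v k) ∧ u n < v n

/-- Non-strict lexicographic order on infinite words. -/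
def lexLe {α : Type*} [LinearOrder α] (u v : ℕ → α) : Prop :=
  lexLt u v ∨ u = v

/-- A morphism `φ : α → List α` applied to a finite word. -/
def substList {α : Type*} (φ : α → List α) (u : List α) : List α :=
  u.flatMap φ

/-- A (non-erasing) morphism applied to an infinite word:
letter number `n` of `φ(w[0])φ(w[1])⋯`. -/
def substInf {α : Type*} (φ : α → List α) (w : ℕ → α) : ℕ → α :=
  fun n => (substList φ (seg w 0 (n + 1))).getD n (w 0)

/-- A morphism is non-erasing if images of all letters are nonempty. -/
def NonErasing {α : Type*} (φ : α → List α) : Prop := ∀ c, φ c ≠ []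

/-- `w` is ultimately periodic, i.e. of the form `u·v·v·v·⋯` with `v` nonempty. -/
def UltimatelyPeriodic {α : Type*} (w : ℕ → α) : Prop :=
  ∃ p, 0 < p ∧ ∃ N, ∀ n, N ≤ n → w (n + p) = w n

/-- Membership in the orbit closure `L_w` of `w` (the closure of `{σⁿ(w)}` in the
product topology): every prefix of `z` occurs in `w`. -/
def InOrbitClosure {α : Type*} (z w : ℕ → α) : Prop :=
  ∀ n, ∃ m, seg z 0 n = seg w m n

/-- Every factor of `w` occurs infinitely often in `w`. -/
def Recurrent {α : Type*} (w : ℕ → α) : Prop :=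
  ∀ u : List α, IsFactor u w → ∀ N, ∃ i, N ≤ i ∧ occursAt u w i

/-- Every factor of `w` occurs in `w` with bounded gaps: there is `C` such that every
window of length `C` contains an occurrence. -/
def UniformlyRecurrent {α : Type*} (w : ℕ → α) : Prop :=
  ∀ u : List α, IsFactor u w →
    ∃ C, ∀ i, ∃ j, i ≤ j ∧ j + u.length ≤ i + C ∧ occursAt u w j

/-- A non-erasing morphism is order-preserving if for all infinite words `u, v`:
`u < v` iff `φ(u) < φ(v)`. -/
def OrderPreserving {α : Type*} [LinearOrder α] (φ : α → List α) : Prop :=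
  ∀ u v : ℕ → α, lexLt u v ↔ lexLt (substInf φ u) (substInf φ v)

/-- `z₀` is the lexicographically greatest element of `S`. -/
def IsLexGreatest {α : Type*} [LinearOrder α] (S : Set (ℕ → α)) (z₀ : ℕ → α) : Prop :=
  z₀ ∈ S ∧ ∀ z ∈ S, z = z₀ ∨ lexLt z z₀

/-- `z₀` is the lexicographically least element of `S`. -/
def IsLexLeast {α : Type*} [LinearOrder α] (S : Set (ℕ → α)) (z₀ : ℕ → α) : Prop :=
  z₀ ∈ S ∧ ∀ z ∈ S, z = z₀ ∨ lexLt z₀ z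

/-- A sequence of reals is equidistributed on `[0,1]`. -/
def Equidistributed (x : ℕ → ℝ) : Prop :=
  ∀ c d : ℝ, 0 ≤ c → c ≤ d → d ≤ 1 →
    Filter.Tendsto
      (fun N : ℕ => (((Finset.range N).filter fun n => c ≤ x n ∧ x n ≤ d).card : ℝ) / N)
      Filter.atTop (nhds (d - c))

/-- Prepend a finite word to an infinite word. -/
def prependWord {α : Type*} (u : List α) (w : ℕ → α) : ℕ → α :=
  fun n => if h : n < u.length then u.get ⟨n, h⟩ else w (n - u.length)

lemma shift_iterate_apply {α : Type*} (w : ℕ → α) (m k : ℕ) : shift^[m] w k = w (m + k) := by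
  induction m generalizing w with
  | zero => simp
  | succ m ih =>
    rw [Function.iterate_succ_apply, ih]
    exact congrArg w (by omega)

lemma seg_shift_iterate {α : Type*} (w : ℕ → α) (m l : ℕ) :
    seg (shift^[m] w) 0 l = seg w m l := by
  simp [seg, shift_iterate_apply]

lemma seg_eq_seg_iff {α : Type*} (w : ℕ → α) (i j l : ℕ) :
    seg w i l = seg w j l ↔ ∀ k < l, w (i + k) = w (j + k) := by
  simp [seg, List.map_inj_left]

lemma inOrbitClosure_shift_iterate {α : Type*} (w : ℕ → α) (m : ℕ) :
    InOrbitClosure (shift^[m] w) w :=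
  fun n => ⟨m, seg_shift_iterate w m n⟩

lemma ultimatelyPeriodic_of_shift_eq {α : Type*} (w : ℕ → α) (m d : ℕ) (hd : 0 < d)
    (h : shift^[m + d] w = shift^[m] w) : UltimatelyPeriodic w := by
  refine ⟨d, hd, m, fun n hn => ?_⟩
  have := congrFun h (n - m)
  rw [shift_iterate_apply, shift_iterate_apply] at this
  rwa [show m + d + (n - m) = n + d by omega, show m + (n - m) = n by omega] at this

/-- An occurrence of `u` at `m` inside a window that reappears `d` letters later gives an
occurrence of `u` at `m + d`. -/
lemma occursAt_shift_add {α : Type*} {w : ℕ → α} {u : List α} {m d : ℕ}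
    (h : occursAt u (shift^[m] w) 0) (hw : ∀ k < u.length, w (m + d + k) = w (m + k)) :
    occursAt u (shift^[m + d] w) 0 := by
  unfold occursAt at h ⊢
  rw [seg_shift_iterate] at h ⊢
  exact h.trans ((seg_eq_seg_iff w _ _ _).2 hw).symm

/-- For a recurrent aperiodic word `w` over a finite ordered alphabet
and factors `u`, `v` of `w`, the orbit of `w` cannot contain at the same time the
lexicographically greatest element of `L_w` starting with `u` and the lexicographically
least element of `L_w` starting with `v`. -/
theorem orbit_no_max_and_min {A : Type*} [Fintype A] [LinearOrder A]
    (w : ℕ → A) (hrec : Recurrent w) (hap : ¬ UltimatelyPeriodic w)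
    (u v : List A) (hu : IsFactor u w) (hv : IsFactor v w) :
    ¬ ∃ m n : ℕ,
        IsLexGreatest {z | InOrbitClosure z w ∧ occursAt u z 0} (shift^[m] w) ∧
        IsLexLeast {z | InOrbitClosure z w ∧ occursAt v z 0} (shift^[n] w) := by
  rintro ⟨m, n, ⟨⟨-, hmu⟩, hmax⟩, ⟨⟨-, hnv⟩, hmin⟩⟩
  obtain ⟨a, ha⟩ : ∃ a, a = min m n := ⟨_, rfl⟩
  -- A window starting at `min m n` long enough to contain both occurrences.
  obtain ⟨L, hL⟩ : ∃ L, L = max m n + u.length + v.length := ⟨_, rfl⟩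
  have hlen : (seg w a L).length = L := by simp [seg]
  obtain ⟨i, hi, hocc⟩ := hrec (seg w a L) ⟨a, by rw [occursAt, hlen]⟩ (a + 1)
  rw [occursAt, hlen, seg_eq_seg_iff] at hocc
  obtain ⟨d, rfl⟩ : ∃ d, i = a + d := ⟨i - a, by omega⟩
  have hd : 0 < d := by omega
  have agree : ∀ p, a ≤ p → p < a + L → w (p + d) = w p := by
    intro p h1 h2
    have := hocc (p - a) (by omega)
    rw [show a + (p - a) = p by omega, show a + d + (p - a) = p + d by omega] at this
    exact this.symm
  have hu' : occursAt u (shift^[m + d] w) 0 := occursAt_shift_add hmu fun k hk => by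
    rw [show m + d + k = m + k + d by omega]
    exact agree _ (by omega) (by omega)
  have hv' : occursAt v (shift^[n + d] w) 0 := occursAt_shift_add hnv fun k hk => by
    rw [show n + d + k = n + k + d by omega]
    exact agree _ (by omega) (by omega)
  rcases hmax _ ⟨inOrbitClosure_shift_iterate w _, hu'⟩ with h | ⟨k, hk, hklt⟩
  · exact hap (ultimatelyPeriodic_of_shift_eq w m d hd h)
  rcases hmin _ ⟨inOrbitClosure_shift_iterate w _, hv'⟩ with h | ⟨l, hl, hllt⟩
  · exact hap (ultimatelyPeriodic_of_shift_eq w n d hd h)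
  simp only [shift_iterate_apply] at hk hklt hl hllt
  rw [show m + d + k = m + k + d by omega] at hklt
  rw [show n + d + l = n + l + d by omega] at hllt
  -- Both deciding positions `m + k` and `n + l` lie past the window, hence past `max m n`.
  have h1 : a + L ≤ m + k := by
    by_contra hc
    exact hklt.ne (agree _ (by omega) (by omega))
  have h2 : a + L ≤ n + l := by
    by_contra hc
    exact hllt.ne' (agree _ (by omega) (by omega))
  rcases lt_trichotomy (m + k) (n + l) with h | h | h
  · have := hl (m + k - n) (by omega)
    rw [show n + (m + k - n) = m + k by omega,
      show n + d + (m + k - n) = m + k + d by omega] at this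
    exact hklt.ne this.symm
  · rw [h] at hklt
    exact lt_asymm hklt hllt
  · have := hk (n + l - m) (by omega)
    rw [show m + (n + l - m) = n + l by omega,
      show m + d + (n + l - m) = n + l + d by omega] at this
    exact hllt.ne this.symm
end

section
/- Let φ be the morphism on {a,b} with φ(a) = a·x·a and φ(b) = b, where x is a finite word containing the letter b, and let w be the infinite fixed point of φ starting with a. Then w is uniformly recurrent. Moreover, any two consecutive occurrences of the letter a in w are at distance at most |x|+1, and for every n ≥ 0, any two consecutive occurrences in w of any factor of φ^n(a) are at distance at most |φ^n(ax)|. -/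
/-! ### Occurrences -/

@[simp] lemma length_seg {α : Type*} (w : ℕ → α) (i l : ℕ) : (seg w i l).length = l := by
  simp [seg]

lemma seg_add {α : Type*} (w : ℕ → α) (i l m : ℕ) :
    seg w i (l + m) = seg w i l ++ seg w (i + l) m := by
  simp [seg, List.range_add, Function.comp_def, add_assoc]

lemma seg_one {α : Type*} (w : ℕ → α) (i : ℕ) : seg w i 1 = [w i] := by
  simp [seg]

lemma occursAt_append {α : Type*} (u v : List α) (w : ℕ → α) (i : ℕ) :
    occursAt (u ++ v) w i ↔ occursAt u w i ∧ occursAt v w (i + u.length) := by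
  unfold occursAt
  rw [List.length_append, seg_add]
  constructor
  · intro h
    exact List.append_inj h (by simp)
  · rintro ⟨h1, h2⟩
    rw [← h1, ← h2]

lemma occursAt_getElem? {α : Type*} {u : List α} {w : ℕ → α} {i k : ℕ} {c : α}
    (h : occursAt u w i) (hk : u[k]? = some c) : w (i + k) = c := by
  unfold occursAt at h
  obtain ⟨hlt, -⟩ := List.getElem?_eq_some_iff.1 hk
  rw [h] at hk
  simpa [seg, hlt] using hk

/-! ### Iterates of a morphism on finite words -/

section Morphism

variable {α : Type*} (φ : α → List α)

lemma iter_append (n : ℕ) (u v : List α) :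
    (substList φ)^[n] (u ++ v) = (substList φ)^[n] u ++ (substList φ)^[n] v := by
  induction n generalizing u v with
  | zero => rfl
  | succ n ih =>
    have h : substList φ (u ++ v) = substList φ u ++ substList φ v := by simp [substList]
    rw [Function.iterate_succ_apply, h, ih]
    rfl

lemma length_le_substList (hne : NonErasing φ) (u : List α) :
    u.length ≤ (substList φ u).length := by
  induction u with
  | nil => simp
  | cons c u ih =>
    have := List.length_pos_iff.2 (hne c)
    simp only [substList, List.flatMap_cons, List.length_append, List.length_cons] at ih ⊢
    omega

lemma length_le_iter (hne : NonErasing φ) (n : ℕ) (u : List α) :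
    u.length ≤ ((substList φ)^[n] u).length := by
  induction n generalizing u with
  | zero => simp
  | succ n ih => exact (length_le_substList φ hne u).trans (ih _)

lemma iter_seg_prefix (n : ℕ) (w : ℕ → α) {l m : ℕ} (h : l ≤ m) :
    (substList φ)^[n] (seg w 0 l) <+: (substList φ)^[n] (seg w 0 m) := by
  obtain ⟨d, rfl⟩ := Nat.exists_eq_add_of_le h
  rw [seg_add, iter_append]
  exact List.prefix_append _ _

/-- The image of a prefix of a fixed point is again a prefix of it. -/
lemma occursAt_substList_seg (hne : NonErasing φ) (w : ℕ → α) (hfp : substInf φ w = w) (m : ℕ) :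
    occursAt (substList φ (seg w 0 m)) w 0 := by
  unfold occursAt
  apply List.ext_getElem (by simp)
  intro k hk hk'
  have h1 : w k = (substList φ (seg w 0 (k + 1))).getD k (w 0) := (congrFun hfp k).symm
  have hlen : k < (substList φ (seg w 0 (k + 1))).length := by
    have := length_le_substList φ hne (seg w 0 (k + 1))
    simp at this
    omega
  rw [List.getD_eq_getElem _ _ hlen] at h1
  have p1 := iter_seg_prefix φ 1 w (le_max_left m (k + 1))
  have p2 := iter_seg_prefix φ 1 w (le_max_right m (k + 1))
  simp only [Function.iterate_one] at p1 p2
  have e1 := p1.getElem hk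
  have e2 := p2.getElem hlen
  simp only [seg, List.getElem_map, List.getElem_range, zero_add] at *
  rw [h1, e1, e2]

lemma occursAt_iter_seg (hne : NonErasing φ) (w : ℕ → α) (hfp : substInf φ w = w) (n m : ℕ) :
    occursAt ((substList φ)^[n] (seg w 0 m)) w 0 := by
  induction n with
  | zero => simp [occursAt]
  | succ n ih =>
    rw [Function.iterate_succ_apply', ih]
    exact occursAt_substList_seg φ hne w hfp _

/-- The position in `φⁿ(w)` at which the block `φⁿ(w[p])` starts. -/
def blockPos (w : ℕ → α) (n p : ℕ) : ℕ := ((substList φ)^[n] (seg w 0 p)).length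

lemma blockPos_succ (w : ℕ → α) (n p : ℕ) :
    blockPos φ w n (p + 1) = blockPos φ w n p + ((substList φ)^[n] [w p]).length := by
  simp [blockPos, seg_add, seg_one, iter_append]

lemma occursAt_block (hne : NonErasing φ) (w : ℕ → α) (hfp : substInf φ w = w) (n p : ℕ) :
    occursAt ((substList φ)^[n] [w p]) w (blockPos φ w n p) := by
  have h := occursAt_iter_seg φ hne w hfp n (p + 1)
  rw [seg_add, seg_one, iter_append, occursAt_append] at h
  simpa [blockPos] using h.2

lemma blockPos_zero (w : ℕ → α) (n : ℕ) : blockPos φ w n 0 = 0 := by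
  have h (n : ℕ) : (substList φ)^[n] ([] : List α) = [] :=
    Function.iterate_fixed (by simp [substList]) n
  simp [blockPos, seg, h]

lemma le_blockPos (hne : NonErasing φ) (w : ℕ → α) (n p : ℕ) : p ≤ blockPos φ w n p := by
  simpa [blockPos] using length_le_iter φ hne n (seg w 0 p)

/-- Every position lies in some block. -/
lemma exists_block (hne : NonErasing φ) (w : ℕ → α) (n t : ℕ) :
    ∃ p, blockPos φ w n p ≤ t ∧ t < blockPos φ w n (p + 1) := by
  classical
  have hex : ∃ q, t < blockPos φ w n q := ⟨t + 1, le_blockPos φ hne w n (t + 1)⟩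
  have hs := Nat.find_spec hex
  rcases hq : Nat.find hex with _ | p
  · rw [hq, blockPos_zero] at hs
    omega
  · rw [hq] at hs
    exact ⟨p, not_lt.1 (Nat.find_min hex (by omega)), hs⟩

end Morphism

/-! ### Runs of the letter `b` -/

lemma exists_false_append (l : List Bool) :
    ∃ e ≤ l.count true, (l ++ [false])[e]? = some false := by
  induction l with
  | nil => exact ⟨0, by simp⟩
  | cons c l ih =>
    cases c
    · exact ⟨0, by simp⟩
    · obtain ⟨e, he, h⟩ := ih
      exact ⟨e + 1, by simpa using he, by simpa using h⟩

section FixedPoint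

variable {x : List Bool} {φ : Bool → List Bool} {w : ℕ → Bool}

lemma nonErasing_of_images (hφa : φ false = false :: (x ++ [false])) (hφb : φ true = [true]) :
    NonErasing φ := by
  intro c
  cases c <;> simp [hφa, hφb]

lemma iter_true (hφb : φ true = [true]) (n : ℕ) : (substList φ)^[n] [true] = [true] :=
  Function.iterate_fixed (by simp [substList, hφb]) n

/-- Along a run of `b`s, blocks have length one. -/
lemma blockPos_add (hφb : φ true = [true]) (n p d : ℕ) (h : ∀ k < d, w (p + k) = true) :
    blockPos φ w n (p + d) = blockPos φ w n p + d := by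
  induction d with
  | zero => rfl
  | succ d ih =>
    rw [← add_assoc, blockPos_succ, h d (by omega), iter_true hφb, ih fun k hk => h k (by omega)]
    simp [add_assoc]

/-- Every run of `b`s in `w` has length at most `|x|_b`. -/
lemma exists_false_near (hφa : φ false = false :: (x ++ [false])) (hφb : φ true = [true])
    (h0 : w 0 = false) (hfp : substInf φ w = w) (m : ℕ) :
    ∃ d ≤ x.count true, w (m + d) = false ∧ ∀ k < d, w (m + k) = true := by
  classical
  -- It suffices to find some `a` in the range; the first one then has only `b`s before it.
  suffices h : ∃ d ≤ x.count true, w (m + d) = false by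
    obtain ⟨d, hd, hw⟩ := h
    have hex : ∃ d, w (m + d) = false := ⟨d, hw⟩
    exact ⟨Nat.find hex, (Nat.find_min' hex hw).trans hd, Nat.find_spec hex,
      fun k hk => by simpa using Nat.find_min hex hk⟩
  have hne := nonErasing_of_images hφa hφb
  induction m using Nat.strong_induction_on with
  | _ m ih =>
    obtain ⟨p, hp, hp'⟩ := exists_block φ hne w 1 m
    have hocc := occursAt_block φ hne w hfp 1 p
    rw [blockPos_succ] at hp'
    cases hwp : w p
    · rw [hwp] at hocc hp'
      obtain ⟨d, rfl⟩ := Nat.exists_eq_add_of_le hp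
      have hφ : (substList φ)^[1] [false] = (false :: x) ++ [false] := by
        simp [substList, hφa]
      rw [hφ] at hocc hp'
      simp only [List.length_append, List.length_cons, List.length_nil] at hp'
      obtain ⟨e, he, hfe⟩ := exists_false_append ((false :: x).drop d)
      refine ⟨e, he.trans ?_, ?_⟩
      · simpa using (List.drop_sublist d (false :: x)).count_le true
      · rw [← List.drop_append_of_le_length (by simp; omega), List.getElem?_drop] at hfe
        rw [add_assoc]
        exact occursAt_getElem? hocc hfe
    · rw [hwp, iter_true hφb] at hp'
      have hm : m = blockPos φ w 1 p := by simp at hp'; omega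
      -- `p` is earlier than `m`: the block of `w 0 = a` has length at least two.
      have hpm : p < m := by
        obtain ⟨q, rfl⟩ : ∃ q, p = q + 1 :=
          Nat.exists_eq_succ_of_ne_zero (by rintro rfl; simp [h0] at hwp)
        have h1 := length_le_iter φ hne 1 (seg w 1 q)
        have h2 : blockPos φ w 1 (q + 1) =
            ((substList φ)^[1] [false]).length + ((substList φ)^[1] (seg w 1 q)).length := by
          rw [blockPos, add_comm q 1, seg_add, seg_one, iter_append, h0, List.length_append]
        have h3 : ((substList φ)^[1] [false]).length = x.length + 2 := by
          simp [substList, hφa]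
        simp only [length_seg] at h1
        omega
      have hex : ∃ d, w (p + d) = false := by
        obtain ⟨d, -, hd⟩ := ih p hpm
        exact ⟨d, hd⟩
      obtain ⟨d, hd, hw⟩ := ih p hpm
      have hrun : ∀ k < Nat.find hex, w (p + k) = true :=
        fun k hk => by simpa using Nat.find_min hex hk
      refine ⟨Nat.find hex, (Nat.find_min' hex hw).trans hd, ?_⟩
      rw [hm, ← blockPos_add hφb 1 p _ hrun]
      have hblock := occursAt_block φ hne w hfp 1 (p + Nat.find hex)
      rw [Nat.find_spec hex] at hblock
      exact occursAt_getElem? (k := 0) hblock (by simp [substList, hφa])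

/-! ### Gaps between blocks -/

lemma count_true_le_iter (hφb : φ true = [true]) (n : ℕ) (u : List Bool) :
    u.count true ≤ ((substList φ)^[n] u).length := by
  induction u with
  | nil => simp
  | cons c u ih =>
    rw [← List.singleton_append, iter_append, List.count_append, List.length_append]
    cases c
    · simp only [List.count_singleton]
      simp
      omega
    · rw [iter_true hφb]
      simpa using ih

/-- A block `φⁿ(a)` starts in every window `(t, t + |φⁿ(ax)|]`. -/
lemma exists_block_start (hφa : φ false = false :: (x ++ [false])) (hφb : φ true = [true])
    (h0 : w 0 = false) (hfp : substInf φ w = w) (n t : ℕ) :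
    ∃ s, t < s ∧ s ≤ t + ((substList φ)^[n] (false :: x)).length ∧
      occursAt ((substList φ)^[n] [false]) w s := by
  have hne := nonErasing_of_images hφa hφb
  obtain ⟨p, hp, hp'⟩ := exists_block φ hne w n t
  obtain ⟨d, hd, hw, hrun⟩ := exists_false_near hφa hφb h0 hfp (p + 1)
  have hocc := occursAt_block φ hne w hfp n (p + 1 + d)
  have hpos := blockPos_add hφb n (p + 1) d hrun
  rw [hw, hpos] at hocc
  refine ⟨_, by omega, ?_, hocc⟩
  have hblock : ((substList φ)^[n] [w p]).length ≤ ((substList φ)^[n] [false]).length := by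
    cases w p
    · exact le_rfl
    · rw [iter_true hφb]
      exact length_le_iter φ hne n [false]
  have hcount := count_true_le_iter hφb n x
  rw [← List.singleton_append, iter_append, List.length_append]
  rw [blockPos_succ]
  omega

/-- Every window `(i, i + |φⁿ(ax)|]` contains an occurrence of each factor of `φⁿ(a)`. -/
lemma exists_occurrence (hφa : φ false = false :: (x ++ [false])) (hφb : φ true = [true])
    (h0 : w 0 = false) (hfp : substInf φ w = w) (n : ℕ) (u : List Bool)
    (hu : u <:+: (substList φ)^[n] [false]) (i : ℕ) :
    ∃ j, i < j ∧ j ≤ i + ((substList φ)^[n] (false :: x)).length ∧ occursAt u w j := by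
  have hne := nonErasing_of_images hφa hφb
  obtain ⟨s, t, hst⟩ := hu
  have key (q : ℕ) (hq : occursAt ((substList φ)^[n] [false]) w q) :
      occursAt u w (q + s.length) := by
    rw [← hst, occursAt_append, occursAt_append] at hq
    exact hq.1.2
  rcases lt_or_ge i s.length with hi | hi
  · -- The block at position `0` provides the occurrence.
    have hocc := occursAt_block φ hne w hfp n 0
    rw [h0, blockPos_zero] at hocc
    refine ⟨0 + s.length, by omega, ?_, key 0 hocc⟩
    have hlen := congrArg List.length hst
    rw [← List.singleton_append, iter_append]
    simp only [List.length_append] at hlen ⊢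
    omega
  · obtain ⟨q, hq, hq', hocc⟩ := exists_block_start hφa hφb h0 hfp n (i - s.length)
    exact ⟨q + s.length, by omega, by omega, key q hocc⟩

lemma lt_length_iter (hφa : φ false = false :: (x ++ [false])) (hφb : φ true = [true]) (n : ℕ) :
    n < ((substList φ)^[n] [false]).length := by
  have hne := nonErasing_of_images hφa hφb
  induction n with
  | zero => simp
  | succ n ih =>
    have h : substList φ [false] = [false] ++ (x ++ [false]) := by simp [substList, hφa]
    have h1 := length_le_iter φ hne n [false]
    rw [Function.iterate_succ_apply, h, iter_append, iter_append]
    simp only [List.length_append, List.length_singleton] at h1 ⊢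
    omega

/-- Every factor of `w` is a factor of some `φⁿ(a)`. -/
lemma exists_infix_iter (hφa : φ false = false :: (x ++ [false])) (hφb : φ true = [true])
    (h0 : w 0 = false) (hfp : substInf φ w = w) (u : List Bool) (hu : IsFactor u w) :
    ∃ n, u <:+: (substList φ)^[n] [false] := by
  obtain ⟨i, hi⟩ := hu
  refine ⟨i + u.length, ?_⟩
  have hlen := lt_length_iter hφa hφb (i + u.length)
  have hocc := occursAt_block φ (nonErasing_of_images hφa hφb) w hfp (i + u.length) 0
  rw [h0, blockPos_zero] at hocc
  unfold occursAt at hi hocc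
  obtain ⟨d, hd⟩ := Nat.exists_eq_add_of_le hlen.le
  rw [hd, seg_add, seg_add, zero_add, ← hi] at hocc
  exact ⟨_, _, hocc.symm⟩

end FixedPoint


/-- Alphabet `{a,b}` with `a = false`, `b = true`.  Let
`φ(a) = a·x·a`, `φ(b) = b` with `b` occurring in `x`, and let `w` be the infinite
fixed point of `φ` starting with `a`.  Then `w` is uniformly recurrent; moreover any
two consecutive occurrences of `a` in `w` are at distance at most `|x|+1`, and for
every `n`, any two consecutive occurrences in `w` of a factor of `φⁿ(a)` are at
distance at most `|φⁿ(ax)|`. -/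
theorem nonprimitive_fixed_point_uniformly_recurrent
    (x : List Bool) (hx : true ∈ x)
    (φ : Bool → List Bool)
    (hφa : φ false = false :: (x ++ [false])) (hφb : φ true = [true])
    (w : ℕ → Bool) (h0 : w 0 = false) (hfp : substInf φ w = w) :
    UniformlyRecurrent w ∧
    (∀ i, w i = false → ∃ j, i < j ∧ j ≤ i + (x.length + 1) ∧ w j = false) ∧
    (∀ n : ℕ, ∀ u : List Bool, u <:+: (substList φ)^[n] [false] →
      ∀ i, occursAt u w i →
        ∃ j, i < j ∧ j ≤ i + ((substList φ)^[n] (false :: x)).length ∧ occursAt u w j) := by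
  refine ⟨?_, ?_, ?_⟩
  · intro u hu
    obtain ⟨n, hn⟩ := exists_infix_iter hφa hφb h0 hfp u hu
    refine ⟨((substList φ)^[n] (false :: x)).length + u.length, fun i => ?_⟩
    obtain ⟨j, h1, h2, h3⟩ := exists_occurrence hφa hφb h0 hfp n u hn i
    exact ⟨j, by omega, by omega, h3⟩
  · intro i _
    obtain ⟨j, h1, h2, h3⟩ :=
      exists_occurrence hφa hφb h0 hfp 0 [false] List.infix_rfl i
    exact ⟨j, h1, by simpa using h2, occursAt_getElem? (k := 0) h3 rfl⟩
  · intro n u hu i _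
    exact exists_occurrence hφa hφb h0 hfp n u hu i
end

section
/- Let φ be a non-erasing morphism on the alphabet {a,b} (with a < b) that admits an infinite fixed point which is aperiodic. If φ is not order-preserving, then φ² is order-preserving. -/
/-! ### Prepending finite words -/

theorem prependWord_nil {α : Type*} (x : ℕ → α) : prependWord [] x = x := by
  funext n; simp [prependWord]

theorem prependWord_cons_zero {α : Type*} (a : α) (l : List α) (x : ℕ → α) :
    prependWord (a :: l) x 0 = a := by
  simp [prependWord]

theorem prependWord_cons_succ {α : Type*} (a : α) (l : List α) (x : ℕ → α) (n : ℕ) :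
    prependWord (a :: l) x (n + 1) = prependWord l x n := by
  simp [prependWord]

theorem prependWord_append {α : Type*} (p q : List α) (x : ℕ → α) :
    prependWord (p ++ q) x = prependWord p (prependWord q x) := by
  induction p with
  | nil => simp [prependWord_nil]
  | cons a p ih =>
    funext n
    cases n with
    | zero => simp [prependWord_cons_zero]
    | succ n => simp [prependWord_cons_succ, ih]

theorem prependWord_length_add {α : Type*} (p : List α) (x : ℕ → α) (n : ℕ) :
    prependWord p x (n + p.length) = x n := by
  simp [prependWord]

theorem shift_prependWord_cons {α : Type*} (a : α) (l : List α) (x : ℕ → α) :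
    shift (prependWord (a :: l) x) = prependWord l x := by
  funext n; exact prependWord_cons_succ a l x n

/-- Two infinite words with the common nonempty prefix `p` agree at `n` once their remainders
agree at all smaller positions. -/
theorem prependWord_congr_at {α : Type*} {p : List α} (hp : p ≠ []) {x y : ℕ → α} {n : ℕ}
    (h : ∀ m < n, x m = y m) : prependWord p x n = prependWord p y n := by
  have := List.length_pos_iff.2 hp
  unfold prependWord
  split
  · rfl
  · exact h _ (by omega)

/-! ### Images of infinite words -/

theorem length_le_length_substList {α : Type*} {φ : α → List α} (hne : NonErasing φ)
    (l : List α) : l.length ≤ (substList φ l).length := by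
  induction l with
  | nil => simp
  | cons a l ih =>
    have := List.length_pos_iff.2 (hne a)
    simp only [substList, List.flatMap_cons, List.length_append, List.length_cons] at ih ⊢
    omega

theorem seg_succ_eq_cons {α : Type*} (w : ℕ → α) (n : ℕ) :
    seg w 0 (n + 1) = w 0 :: seg (shift w) 0 n := by
  simp only [seg, List.range_succ_eq_map, List.map_cons, List.map_map, shift]
  congr 1

/-- Letter `n` of the image can be read off from any prefix of length greater than `n`, and
with any default value. -/
theorem getD_substList_seg {α : Type*} {φ : α → List α} (hne : NonErasing φ) (w : ℕ → α)
    {n k : ℕ} (hk : n < k) (d : α) :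
    (substList φ (seg w 0 k)).getD n d = substInf φ w n := by
  obtain ⟨j, rfl⟩ : ∃ j, k = (n + 1) + j := ⟨k - (n + 1), by omega⟩
  have hs : seg w 0 ((n + 1) + j) = seg w 0 (n + 1) ++ seg w (n + 1) j := by
    simp only [seg, List.range_add, List.map_append, List.map_map]
    congr 1
    apply List.map_congr_left
    intro i _
    simp [Function.comp]
  have hl : n < (substList φ (seg w 0 (n + 1))).length := by
    have := length_le_length_substList hne (seg w 0 (n + 1))
    simp only [seg, List.length_map, List.length_range] at this ⊢
    omega
  unfold substInf
  rw [hs, substList, List.flatMap_append, ← substList, ← substList,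
    List.getD_append _ _ _ _ hl, List.getD_eq_getElem _ _ hl, List.getD_eq_getElem _ _ hl]

/-- The defining recursion of the image of an infinite word. -/
theorem substInf_eq {α : Type*} {φ : α → List α} (hne : NonErasing φ) (w : ℕ → α) :
    substInf φ w = prependWord (φ (w 0)) (substInf φ (shift w)) := by
  funext n
  have hpos := List.length_pos_iff.2 (hne (w 0))
  have h1 : substInf φ w n
      = (φ (w 0) ++ substList φ (seg (shift w) 0 n)).getD n (w 0) := by
    simp only [substInf, seg_succ_eq_cons, substList, List.flatMap_cons]
  rw [h1]
  unfold prependWord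
  split
  next h =>
    rw [List.getD_append _ _ _ _ h, List.getD_eq_getElem _ _ h]
    rfl
  next h =>
    rw [List.getD_append_right _ _ _ _ (by omega)]
    exact getD_substList_seg hne _ (by omega) _

theorem substInf_prependWord {α : Type*} {φ : α → List α} (hne : NonErasing φ)
    (l : List α) (x : ℕ → α) :
    substInf φ (prependWord l x) = prependWord (substList φ l) (substInf φ x) := by
  induction l with
  | nil => simp [substList, prependWord_nil]
  | cons a l ih =>
    rw [substInf_eq hne, shift_prependWord_cons, prependWord_cons_zero, ih,
      ← prependWord_append]
    simp [substList]

theorem nonErasing_comp {α : Type*} {φ ψ : α → List α} (hφ : NonErasing φ)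
    (hψ : NonErasing ψ) : NonErasing (fun c => substList φ (ψ c)) := by
  intro c h
  have h1 := length_le_length_substList hφ (ψ c)
  have h2 := List.length_pos_iff.2 (hψ c)
  have h3 : (substList φ (ψ c)).length = 0 := by simpa using h
  omega

theorem substInf_comp {α : Type*} {φ ψ : α → List α} (hφ : NonErasing φ)
    (hψ : NonErasing ψ) (u : ℕ → α) :
    substInf (fun c => substList φ (ψ c)) u = substInf φ (substInf ψ u) := by
  have key : ∀ n, ∀ u : ℕ → α,
      substInf (fun c => substList φ (ψ c)) u n = substInf φ (substInf ψ u) n := by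
    intro n
    induction n using Nat.strong_induction_on with
    | _ n ih =>
      intro u
      rw [substInf_eq (nonErasing_comp hφ hψ) u, substInf_eq hψ u, substInf_prependWord hφ]
      exact prependWord_congr_at (nonErasing_comp hφ hψ (u 0)) fun m hm => ih m hm _
  funext n
  exact key n u

/-! ### Commuting images force periodicity -/

theorem prepend_substInf_of_comm {φ : Bool → List Bool} (hne : NonErasing φ)
    (hc : φ false ++ φ true = φ true ++ φ false) (u : ℕ → Bool) :
    prependWord (φ false) (substInf φ u) = substInf φ u := by
  have key : ∀ n, ∀ u : ℕ → Bool,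
      prependWord (φ false) (substInf φ u) n = substInf φ u n := by
    intro n
    induction n using Nat.strong_induction_on with
    | _ n ih =>
      intro u
      have hcomm : φ false ++ φ (u 0) = φ (u 0) ++ φ false := by
        cases u 0
        · rfl
        · exact hc
      rw [substInf_eq hne u, ← prependWord_append, hcomm, prependWord_append]
      exact prependWord_congr_at (hne _) fun m hm => ih m hm _
  funext n
  exact key n u

theorem ultimatelyPeriodic_of_comm {φ : Bool → List Bool} (hne : NonErasing φ)
    (hc : φ false ++ φ true = φ true ++ φ false) (u : ℕ → Bool) :
    UltimatelyPeriodic (substInf φ u) := by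
  refine ⟨(φ false).length, List.length_pos_iff.2 (hne _), 0, fun n _ => ?_⟩
  conv_lhs => rw [← prepend_substInf_of_comm hne hc u]
  exact prependWord_length_add _ _ _

/-! ### Lexicographic order -/

theorem lexLt_prependWord {α : Type*} [LinearOrder α] {x y : ℕ → α} (h : lexLt x y)
    (p : List α) : lexLt (prependWord p x) (prependWord p y) := by
  obtain ⟨n, h1, h2⟩ := h
  refine ⟨n + p.length, fun k hk => ?_, by simpa only [prependWord_length_add] using h2⟩
  unfold prependWord
  split
  · rfl
  · exact h1 _ (by omega)

theorem lexLt_trichotomy {α : Type*} [LinearOrder α] (u v : ℕ → α) :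
    lexLt u v ∨ u = v ∨ lexLt v u := by
  classical
  by_cases h : ∃ n, u n ≠ v n
  · have hlt : ∀ k < Nat.find h, u k = v k := fun k hk => not_not.1 (Nat.find_min h hk)
    rcases lt_or_gt_of_ne (Nat.find_spec h) with h1 | h1
    · exact Or.inl ⟨_, hlt, h1⟩
    · exact Or.inr (Or.inr ⟨_, fun k hk => (hlt k hk).symm, h1⟩)
  · push Not at h
    exact Or.inr (Or.inl (funext h))

theorem lexLt_asymm {α : Type*} [LinearOrder α] {u v : ℕ → α} (h : lexLt u v) :
    ¬ lexLt v u := by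
  rintro ⟨m, h1, h2⟩
  obtain ⟨n, h3, h4⟩ := h
  rcases lt_trichotomy m n with hmn | rfl | hmn
  · exact absurd (h3 m hmn) h2.ne'
  · exact absurd h4 h2.asymm
  · exact absurd (h1 n hmn) h4.ne'

theorem lexLt_irrefl {α : Type*} [LinearOrder α] (u : ℕ → α) : ¬ lexLt u u :=
  fun h => lexLt_asymm h h

/-- If neither of two finite words is a prefix of the other, their first mismatch decides the
order of all their right-infinite extensions. -/
theorem prefix_or_lexLt {α : Type*} [LinearOrder α] (p q : List α) :
    (∃ r, q = p ++ r) ∨ (∃ r, p = q ++ r) ∨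
      (∀ x y, lexLt (prependWord p x) (prependWord q y)) ∨
      (∀ x y, lexLt (prependWord q x) (prependWord p y)) := by
  induction p generalizing q with
  | nil => exact Or.inl ⟨q, rfl⟩
  | cons a p ih =>
    cases q with
    | nil => exact Or.inr (Or.inl ⟨_, rfl⟩)
    | cons b q =>
      have hcons : ∀ (c : α) (l : List α) (x : ℕ → α),
          prependWord (c :: l) x = prependWord [c] (prependWord l x) :=
        fun c l x => prependWord_append [c] l x
      rcases lt_trichotomy a b with hab | rfl | hab
      · refine Or.inr (Or.inr (Or.inl fun x y => ⟨0, by simp, ?_⟩))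
        simpa only [prependWord_cons_zero] using hab
      · rcases ih q with ⟨r, rfl⟩ | ⟨r, rfl⟩ | h | h
        · exact Or.inl ⟨r, rfl⟩
        · exact Or.inr (Or.inl ⟨r, rfl⟩)
        · refine Or.inr (Or.inr (Or.inl fun x y => ?_))
          rw [hcons a p, hcons a q]
          exact lexLt_prependWord (h x y) _
        · refine Or.inr (Or.inr (Or.inr fun x y => ?_))
          rw [hcons a p, hcons a q]
          exact lexLt_prependWord (h x y) _
      · refine Or.inr (Or.inr (Or.inr fun x y => ⟨0, by simp, ?_⟩))
        simpa only [prependWord_cons_zero] using hab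

/-! ### The Euclidean descent -/

/-- The letter `c` is dominated under `φ`: images of words beginning with `c` are smaller than
images of words beginning with the other letter. -/
def Dominated (φ : Bool → List Bool) (c : Bool) : Prop :=
  ∀ u v : ℕ → Bool, u 0 = c → v 0 = !c → lexLt (substInf φ u) (substInf φ v)

/-- The elementary morphism `d ↦ d`, `d' ↦ d d'`, where `d'` is the letter other than `d`. -/
def elemMorphism (d : Bool) : Bool → List Bool :=
  fun c => if c = d then [d] else [d, !d]

theorem nonErasing_elemMorphism (d : Bool) : NonErasing (elemMorphism d) := by
  intro c
  unfold elemMorphism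
  split <;> simp

/-- One step of the descent: if `φ = ψ ∘ τ` with `τ` elementary, then a letter dominated under
`ψ` is dominated under `φ`. For `u` beginning with `d` and `v` with `d'`, the words `φ(u)`,
`φ(v)` share the prefix `ψ(d)`, and what remains is `ψ(τ(shift u))`, with `τ(shift u)` beginning
with `d`, and `ψ` of a word beginning with `d'`. -/
theorem dominated_comp_elem {ψ : Bool → List Bool} (hψ : NonErasing ψ) (d : Bool) {c : Bool}
    (h : Dominated ψ c) : Dominated (fun x => substList ψ (elemMorphism d x)) c := by
  have hτ := nonErasing_elemMorphism d
  have hhead : ∀ u : ℕ → Bool, substInf (elemMorphism d) u 0 = d := by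
    intro u
    rw [substInf_eq hτ]
    unfold elemMorphism
    split <;> exact prependWord_cons_zero _ _ _
  have hd : ∀ u : ℕ → Bool, u 0 = d →
      substInf (fun x => substList ψ (elemMorphism d x)) u
        = prependWord (ψ d) (substInf ψ (substInf (elemMorphism d) (shift u))) := by
    intro u hu
    rw [substInf_comp hψ hτ, substInf_eq hτ u, hu, substInf_prependWord hψ]
    simp [elemMorphism, substList]
  have hd' : ∀ v : ℕ → Bool, v 0 = !d →
      substInf (fun x => substList ψ (elemMorphism d x)) v
        = prependWord (ψ d)
            (substInf ψ (prependWord [!d] (substInf (elemMorphism d) (shift v)))) := by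
    intro v hv
    rw [substInf_comp hψ hτ, substInf_eq hτ v, hv, substInf_prependWord hψ,
      substInf_prependWord hψ, ← prependWord_append]
    simp [elemMorphism, substList]
  intro u v hu hv
  by_cases hcd : c = d
  · subst hcd
    rw [hd u hu, hd' v hv]
    exact lexLt_prependWord (h _ _ (hhead _) (prependWord_cons_zero _ _ _)) _
  · have hc : c = !d := by cases c <;> cases d <;> simp_all
    subst hc
    rw [hd' u hu, hd v (by simpa using hv)]
    exact lexLt_prependWord
      (h _ _ (prependWord_cons_zero _ _ _) (by rw [hhead]; simp)) _

theorem comm_of_comm_letter {φ : Bool → List Bool} {d : Bool}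
    (h : φ d ++ φ (!d) = φ (!d) ++ φ d) : φ false ++ φ true = φ true ++ φ false := by
  cases d
  · exact h
  · exact h.symm

/-- If the images of the two letters do not commute, one of the letters is dominated. -/
theorem exists_dominated_letter (φ : Bool → List Bool) (hne : NonErasing φ)
    (hc : φ false ++ φ true ≠ φ true ++ φ false) : ∃ c, Dominated φ c := by
  induction hN : (φ false).length + (φ true).length using Nat.strong_induction_on
    generalizing φ with
  | _ N ih =>
    have step : ∀ d r, φ (!d) = φ d ++ r → ∃ c, Dominated φ c := by
      intro d r hr
      set ψ : Bool → List Bool := fun c => if c = d then φ d else r with hψdef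
      have hψd : ψ d = φ d := by simp [hψdef]
      have hψd' : ψ (!d) = r := by simp [hψdef]
      have hr0 : r ≠ [] := by
        rintro rfl
        exact hc (comm_of_comm_letter (d := d) (by rw [hr]; simp))
      have hψ : NonErasing ψ := by
        intro c
        by_cases h : c = d
        · subst h; rw [hψd]; exact hne _
        · have : c = !d := by cases c <;> cases d <;> simp_all
          rw [this, hψd']; exact hr0
      have hφ : φ = fun x => substList ψ (elemMorphism d x) := by
        funext x
        by_cases h : x = d
        · subst h; simp [elemMorphism, substList, hψd]
        · have : x = !d := by cases x <;> cases d <;> simp_all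
          subst this
          simp [elemMorphism, substList, hψd, hψd', hr]
      have hψc : ψ false ++ ψ true ≠ ψ true ++ ψ false := by
        intro h
        have h' : ψ d ++ ψ (!d) = ψ (!d) ++ ψ d := by
          cases d
          · exact h
          · exact h.symm
        rw [hψd, hψd'] at h'
        refine hc (comm_of_comm_letter (d := d) ?_)
        rw [hr, List.append_assoc, ← h']
      have hlen : (ψ false).length + (ψ true).length < N := by
        have hpos := List.length_pos_iff.2 (hne d)
        have e1 : (ψ false).length + (ψ true).length = (ψ d).length + (ψ (!d)).length := by
          cases d
          · rfl
          · exact Nat.add_comm _ _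
        have e2 : (φ false).length + (φ true).length = (φ d).length + (φ (!d)).length := by
          cases d
          · rfl
          · exact Nat.add_comm _ _
        rw [hr, List.length_append] at e2
        rw [hψd, hψd'] at e1
        omega
      obtain ⟨c, hcdom⟩ := ih _ hlen ψ hψ hψc rfl
      exact ⟨c, hφ ▸ dominated_comp_elem hψ d hcdom⟩
    rcases prefix_or_lexLt (φ false) (φ true) with ⟨r, hr⟩ | ⟨r, hr⟩ | h | h
    · exact step false r hr
    · exact step true r hr
    · refine ⟨false, fun u v hu hv => ?_⟩
      rw [substInf_eq hne u, substInf_eq hne v, hu, hv]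
      exact h _ _
    · refine ⟨true, fun u v hu hv => ?_⟩
      rw [substInf_eq hne u, substInf_eq hne v, hu, hv]
      exact h _ _

/-! ### Preserving or reversing the order -/

/-- A comparison valid for the images of all `u`, `v` beginning with `a`, `b` respectively
extends to all `u < v`, by stripping the common prefix. The relation `R` is instantiated with
`lexLt` and with its converse. -/
theorem rel_of_lexLt {φ : Bool → List Bool} (hne : NonErasing φ)
    {R : (ℕ → Bool) → (ℕ → Bool) → Prop}
    (hR : ∀ x y, R x y → ∀ p, R (prependWord p x) (prependWord p y))
    (h : ∀ u v : ℕ → Bool, u 0 = false → v 0 = true → R (substInf φ u) (substInf φ v))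
    (u v : ℕ → Bool) (huv : lexLt u v) : R (substInf φ u) (substInf φ v) := by
  obtain ⟨n, h1, h2⟩ := huv
  induction n generalizing u v with
  | zero =>
    have := Bool.lt_iff.1 h2
    exact h u v this.1 this.2
  | succ n ih =>
    rw [substInf_eq hne u, substInf_eq hne v, h1 0 (Nat.succ_pos n)]
    exact hR _ _ (ih (shift u) (shift v) (fun k hk => h1 (k + 1) (by omega)) h2) _

theorem orderPreserving_of_imp {φ : Bool → List Bool}
    (h : ∀ u v, lexLt u v → lexLt (substInf φ u) (substInf φ v)) : OrderPreserving φ := by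
  refine fun u v => ⟨h u v, fun huv => ?_⟩
  rcases lexLt_trichotomy u v with h1 | rfl | h1
  · exact h1
  · exact absurd huv (lexLt_irrefl _)
  · exact absurd (h v u h1) (lexLt_asymm huv)

/-- (Alphabet `{a,b}`, `a = false < b = true`.)  If a non-erasing
binary morphism `φ` admits an aperiodic infinite fixed point and `φ` is not
order-preserving, then `φ²` is order-preserving. -/
theorem square_orderPreserving (φ : Bool → List Bool) (hne : NonErasing φ)
    (w : ℕ → Bool) (hfp : substInf φ w = w) (hap : ¬ UltimatelyPeriodic w)
    (hnop : ¬ OrderPreserving φ) :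
    OrderPreserving (fun c => substList φ (φ c)) := by
  have hc : φ false ++ φ true ≠ φ true ++ φ false := fun h =>
    hap (hfp ▸ ultimatelyPeriodic_of_comm hne h w)
  obtain ⟨c, hdom⟩ := exists_dominated_letter φ hne hc
  cases c with
  | false =>
    exact absurd (orderPreserving_of_imp
      (rel_of_lexLt hne (R := lexLt) (fun _ _ h p => lexLt_prependWord h p) hdom)) hnop
  | true =>
    have hrev : ∀ u v, lexLt u v → lexLt (substInf φ v) (substInf φ u) :=
      rel_of_lexLt hne (R := fun x y => lexLt y x) (fun _ _ h p => lexLt_prependWord h p)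
        fun u v hu hv => hdom v u hv hu
    refine orderPreserving_of_imp fun u v huv => ?_
    rw [substInf_comp hne hne, substInf_comp hne hne]
    exact hrev _ _ (hrev _ _ huv)
end

section
/- Let φ be a primitive morphism on the alphabet {a,b} with φ(a) = p_a·s and φ(b) = p_b·s for finite words p_a, p_b, s, and let φ' be the morphism defined by φ'(a) = s·p_a and φ'(b) = s·p_b. Then for every finite word u over {a,b}: u is a factor of φ^n(a) for some n ∈ ℕ if and only if u is a factor of (φ')^n(a) for some n ∈ ℕ. (In other words, the subshifts generated by φ and φ' coincide: L_φ = L_{φ'}.) -/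
/-- A morphism on `{a,b}` is primitive: for some `n`, both letters occur in `φⁿ(a)`
and in `φⁿ(b)`. -/
def Primitive (φ : Bool → List Bool) : Prop :=
  ∃ n : ℕ, ∀ c d : Bool, d ∈ (substList φ)^[n] [c]

lemma iterate_substList_nil (φ : Bool → List Bool) (n : ℕ) :
    (substList φ)^[n] [] = [] := by
  induction n with
  | zero => rfl
  | succ n ih => rw [Function.iterate_succ_apply', ih]; rfl

lemma iterate_substList_append (φ : Bool → List Bool) (n : ℕ) (u v : List Bool) :
    (substList φ)^[n] (u ++ v) = (substList φ)^[n] u ++ (substList φ)^[n] v := by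
  induction n with
  | zero => rfl
  | succ n ih => simp only [Function.iterate_succ_apply', ih, substList, List.flatMap_append]

lemma iterate_substList_cons (φ : Bool → List Bool) (n : ℕ) (c : Bool) (v : List Bool) :
    (substList φ)^[n] (c :: v) = (substList φ)^[n] [c] ++ (substList φ)^[n] v :=
  iterate_substList_append φ n [c] v

lemma Primitive.nonErasing {φ : Bool → List Bool} (h : Primitive φ) : NonErasing φ := by
  obtain ⟨n, hn⟩ := h
  intro c hc
  cases n with
  | zero => simpa using hn true false
  | succ n =>
    have := hn c c
    simp [Function.iterate_succ_apply, substList, hc] at this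
    rw [iterate_substList_nil] at this
    simp at this

lemma NonErasing.length_le_iterate {φ : Bool → List Bool} (h : NonErasing φ) (n : ℕ)
    (w : List Bool) : w.length ≤ ((substList φ)^[n] w).length := by
  have step : ∀ v : List Bool, v.length ≤ (substList φ v).length := by
    intro v
    induction v with
    | nil => simp
    | cons c v ih =>
      have := List.length_pos_iff.mpr (h c)
      simp only [substList, List.flatMap_cons, List.length_append, List.length_cons] at ih ⊢
      omega
  induction n with
  | zero => simp
  | succ n ih =>
    rw [Function.iterate_succ_apply']
    exact ih.trans (step _)

lemma Primitive.of_mem_iff {φ φ' : Bool → List Bool} (h : Primitive φ)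
    (hmem : ∀ c d, d ∈ φ c ↔ d ∈ φ' c) : Primitive φ' := by
  obtain ⟨n, hn⟩ := h
  have key : ∀ (n : ℕ) (w : List Bool) (d : Bool),
      d ∈ (substList φ)^[n] w ↔ d ∈ (substList φ')^[n] w := by
    intro n w
    induction n with
    | zero => simp
    | succ n ih =>
      intro d
      simp only [Function.iterate_succ_apply', substList, List.mem_flatMap] at ih ⊢
      simp only [ih, hmem]
  exact ⟨n, fun c d => (key n [c] d).mp (hn c d)⟩

/-- If every `φᵏ(c)` contains both letters, then `φᵏ` at least doubles lengths, and each letter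
occurs in `φᵏ(w)` at least `|w|` times; so the number of `a`s grows without bound. -/
lemma Primitive.exists_count_false {φ : Bool → List Bool} (h : Primitive φ) (N : ℕ) :
    ∃ m, N ≤ ((substList φ)^[m] [false]).count false := by
  obtain ⟨k, hk⟩ := h
  have hcount : ∀ (d : Bool) (w : List Bool), w.length ≤ ((substList φ)^[k] w).count d := by
    intro d w
    induction w with
    | nil => simp
    | cons c w ih =>
      have := List.count_pos_iff.mpr (hk c d)
      rw [iterate_substList_cons, List.count_append, List.length_cons]
      omega
  have hlen : ∀ j : ℕ, ∃ m, j < ((substList φ)^[m] [false]).length := by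
    intro j
    induction j with
    | zero => exact ⟨0, by simp⟩
    | succ j ih =>
      obtain ⟨m, hm⟩ := ih
      refine ⟨k + m, ?_⟩
      rw [Function.iterate_add_apply]
      have h1 := hcount false ((substList φ)^[m] [false])
      have h2 := hcount true ((substList φ)^[m] [false])
      have h3 := List.count_false_add_count_true
        ((substList φ)^[k] ((substList φ)^[m] [false]))
      omega
  obtain ⟨m, hm⟩ := hlen N
  refine ⟨k + m, ?_⟩
  rw [Function.iterate_add_apply]
  exact hm.le.trans (hcount false _)

lemma exists_split_right {N : ℕ} {w : List Bool} (h : N + 1 ≤ w.count false) :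
    ∃ x y, w = x ++ false :: y ∧ N ≤ y.length := by
  -- split at the first occurrence of `a`
  obtain ⟨x, y, rfl, hx⟩ := List.eq_append_cons_of_mem
    (List.count_pos_iff.mp (Nat.lt_of_lt_of_le (Nat.succ_pos N) h))
  refine ⟨x, y, rfl, ?_⟩
  have h1 := List.count_le_length (a := false) (l := y)
  rw [List.count_append, List.count_cons_self, List.count_eq_zero.mpr hx] at h
  omega

lemma exists_split_left {N : ℕ} {w : List Bool} (h : N + 1 ≤ w.count false) :
    ∃ x y, w = x ++ false :: y ∧ N ≤ x.length := by
  rw [← List.count_reverse] at h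
  obtain ⟨x, y, hw, hy⟩ := exists_split_right h
  refine ⟨y.reverse, x.reverse, ?_, by simpa using hy⟩
  rw [← List.reverse_reverse w, hw]
  simp

lemma exists_conj_iterate {φ φ' : Bool → List Bool} {s : List Bool}
    (h : ∀ c, s ++ φ c = φ' c ++ s) (n : ℕ) :
    ∃ t, ∀ w, t ++ (substList φ)^[n] w = (substList φ')^[n] w ++ t := by
  have h1 : ∀ w, s ++ substList φ w = substList φ' w ++ s := by
    intro w
    induction w with
    | nil => simp [substList]
    | cons c w ih =>
      simp only [substList, List.flatMap_cons] at ih ⊢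
      rw [← List.append_assoc, h, List.append_assoc, ih, List.append_assoc]
  induction n with
  | zero => exact ⟨[], by simp⟩
  | succ n ih =>
    obtain ⟨t, ht⟩ := ih
    refine ⟨substList φ' t ++ s, fun w => ?_⟩
    have h2 : ∀ u v, substList φ' (u ++ v) = substList φ' u ++ substList φ' v := by
      simp [substList]
    simp only [Function.iterate_succ_apply']
    rw [List.append_assoc, h1, ← List.append_assoc, ← h2, ht, h2, List.append_assoc]

lemma infix_of_conj_right {t A u B C W : List Bool}
    (h : t ++ (A ++ u ++ B ++ C) = W ++ t) (hC : t.length ≤ C.length) : u <:+: W := by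
  have hp : t ++ A ++ u <+: W := by
    refine List.prefix_of_prefix_length_le (l₃ := W ++ t) ⟨B ++ C, ?_⟩ (List.prefix_append _ _) ?_
    · rw [← h]; simp
    · have := congrArg List.length h
      simp only [List.length_append] at this ⊢
      omega
  exact (List.suffix_append (t ++ A) u).isInfix.trans hp.isInfix

lemma infix_of_conj_left {t A u B C W : List Bool}
    (h : t ++ W = C ++ (A ++ u ++ B) ++ t) (hC : t.length ≤ C.length) : u <:+: W := by
  have hp : u ++ B ++ t <:+ W := by
    refine List.suffix_of_suffix_length_le (l₃ := t ++ W) ⟨C ++ A, ?_⟩ (List.suffix_append _ _) ?_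
    · rw [h]; simp
    · have := congrArg List.length h
      simp only [List.length_append] at this ⊢
      omega
  refine List.IsInfix.trans ?_ hp.isInfix
  exact ⟨[], B ++ t, by simp⟩

/-- Alphabet `{a,b}` with `a = false`, `b = true`.  Let `φ` be a
primitive morphism with `φ(a) = pₐ·s`, `φ(b) = p_b·s`, and let `φ'(a) = s·pₐ`,
`φ'(b) = s·p_b`.  Then the subshifts generated by `φ` and `φ'` coincide: a finite word
is a factor of some `φⁿ(a)` iff it is a factor of some `φ'ⁿ(a)`. -/
theorem conjugate_same_subshift (φ φ' : Bool → List Bool) (hprim : Primitive φ)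
    (pa pb s : List Bool)
    (hφa : φ false = pa ++ s) (hφb : φ true = pb ++ s)
    (hφ'a : φ' false = s ++ pa) (hφ'b : φ' true = s ++ pb) :
    ∀ u : List Bool,
      (∃ n : ℕ, u <:+: (substList φ)^[n] [false]) ↔
      (∃ n : ℕ, u <:+: (substList φ')^[n] [false]) := by
  have hprim' : Primitive φ' := by
    refine hprim.of_mem_iff fun c d => ?_
    cases c <;> simp [hφa, hφb, hφ'a, hφ'b, or_comm]
  have hconj : ∀ c, s ++ φ c = φ' c ++ s := by
    intro c
    cases c <;> simp [hφa, hφb, hφ'a, hφ'b]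
  intro u
  constructor
  · rintro ⟨n, A, B, hu⟩
    obtain ⟨t, ht⟩ := exists_conj_iterate hconj n
    obtain ⟨m, hm⟩ := hprim'.exists_count_false (t.length + 1)
    obtain ⟨x, y, hw, hy⟩ := exists_split_right hm
    refine ⟨n + m, ?_⟩
    rw [Function.iterate_add_apply]
    have := ht ((substList φ')^[m] [false])
    nth_rewrite 1 [hw] at this
    rw [iterate_substList_append, iterate_substList_cons, ← hu] at this
    refine infix_of_conj_right (A := (substList φ)^[n] x ++ A) (B := B)
      (C := (substList φ)^[n] y) (t := t) ?_ (hy.trans (hprim.nonErasing.length_le_iterate n y))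
    rw [← this]
    simp
  · rintro ⟨n, A, B, hu⟩
    obtain ⟨t, ht⟩ := exists_conj_iterate hconj n
    obtain ⟨m, hm⟩ := hprim.exists_count_false (t.length + 1)
    obtain ⟨x, y, hw, hx⟩ := exists_split_left hm
    refine ⟨n + m, ?_⟩
    rw [Function.iterate_add_apply]
    have := ht ((substList φ)^[m] [false])
    nth_rewrite 2 [hw] at this
    rw [iterate_substList_append, iterate_substList_cons φ' n false y, ← hu] at this
    refine infix_of_conj_left (A := A) (B := B ++ (substList φ')^[n] y)
      (C := (substList φ')^[n] x) (t := t) ?_ (hx.trans (hprim'.nonErasing.length_le_iterate n x))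
    rw [this]
    simp
end

section
/- Let φ_tm be the Thue–Morse morphism on {a,b} (a < b) with φ_tm(a) = ab, φ_tm(b) = ba, let w_tm be its infinite fixed point starting with a, and let L_tm be the orbit closure of w_tm. Then for every u ∈ L_tm there exist a unique p ∈ {0,1} and a unique v ∈ L_tm such that u = σ^p(φ_tm(v)). -/
/-- The Thue–Morse morphism on `{a,b}` (`a = false`, `b = true`): `a ↦ ab`, `b ↦ ba`. -/
def tmMorph : Bool → List Bool := fun c => [c, !c]

theorem seg_eq_iff {u w : ℕ → Bool} {i j n : ℕ} :
    seg u i n = seg w j n ↔ ∀ k < n, u (i + k) = w (j + k) := by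
  simp [seg]

theorem substList_tm_getD (d : Bool) (l : List Bool) : ∀ k, k < l.length →
    (substList tmMorph l).getD (2 * k) d = l.getD k d ∧
    (substList tmMorph l).getD (2 * k + 1) d = !(l.getD k d) := by
  induction l with
  | nil => intro k hk; simp at hk
  | cons a l ih =>
    intro k hk
    cases k with
    | zero => simp [substList, tmMorph]
    | succ k =>
      have := ih k (by simpa using hk)
      simpa [substList, tmMorph, Nat.mul_add] using this

theorem seg_getD (v : ℕ → Bool) (n k : ℕ) (d : Bool) (h : k < n) :
    (seg v 0 n).getD k d = v k := by
  simp [seg, List.getD, h]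

theorem substInf_even (v : ℕ → Bool) (k : ℕ) : substInf tmMorph v (2 * k) = v k := by
  unfold substInf
  rw [(substList_tm_getD _ _ k (by simp [seg]; omega)).1, seg_getD _ _ _ _ (by omega)]

theorem substInf_odd (v : ℕ → Bool) (k : ℕ) : substInf tmMorph v (2 * k + 1) = !(v k) := by
  unfold substInf
  rw [(substList_tm_getD _ _ k (by simp [seg]; omega)).2, seg_getD _ _ _ _ (by omega)]

/-- The Thue–Morse word has no alternating factor of length five. -/
theorem no_alternating {w : ℕ → Bool} (he : ∀ k, w (2 * k) = w k)
    (ho : ∀ k, w (2 * k + 1) = !(w k)) (m : ℕ)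
    (h : ∀ i < 4, w (m + i + 1) = !(w (m + i))) : False := by
  have cube : ∀ k, w k = w (k + 1) → w (k + 1) = w (k + 2) → False := by
    intro k h1 h2
    obtain ⟨j, rfl | rfl⟩ := Nat.even_or_odd' k
    · have a := he j
      have b := ho j
      simp_all
    · have a := he (j + 1)
      have b := ho (j + 1)
      rw [show 2 * (j + 1) = 2 * j + 1 + 1 by ring] at a b
      simp_all
  have c0 := h 0 (by omega)
  have c1 := h 1 (by omega)
  have c2 := h 2 (by omega)
  have c3 := h 3 (by omega)
  obtain ⟨k, rfl | rfl⟩ := Nat.even_or_odd' m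
  · have e0 := he k
    have e1 := he (k + 1)
    have e2 := he (k + 2)
    rw [show 2 * (k + 1) = 2 * k + 2 by ring] at e1
    rw [show 2 * (k + 2) = 2 * k + 4 by ring] at e2
    simp only [Nat.add_assoc, Nat.reduceAdd, Nat.add_zero] at *
    exact cube k (by simp_all) (by simp_all)
  · have e0 := ho k
    have e1 := he (k + 1)
    have e2 := he (k + 2)
    rw [show 2 * (k + 1) = 2 * k + 2 by ring] at e1
    rw [show 2 * (k + 2) = 2 * k + 4 by ring] at e2
    simp only [Nat.add_assoc, Nat.reduceAdd, Nat.add_zero] at *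
    exact cube k (by simp_all) (by simp_all)

/-- One parity of positions is enough to find all prefixes of `u` in `w`: if each parity failed for
some length, both would fail for the larger of the two lengths. -/
theorem exists_parity {u w : ℕ → Bool} (hu : InOrbitClosure u w) :
    ∃ p < 2, ∀ n, ∃ k, ∀ i < n, u i = w (2 * k + p + i) := by
  by_contra! hc
  obtain ⟨n0, h0⟩ := hc 0 (by omega)
  obtain ⟨n1, h1⟩ := hc 1 (by omega)
  obtain ⟨m, hm⟩ := hu (max n0 n1)
  rw [seg_eq_iff] at hm
  simp only [Nat.zero_add] at hm
  obtain ⟨k, rfl | rfl⟩ := Nat.even_or_odd' m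
  · obtain ⟨i, hi, hne⟩ := h0 k
    exact hne (hm i (by omega))
  · obtain ⟨i, hi, hne⟩ := h1 k
    exact hne (hm i (by omega))

/-- A word that is both of the form `φ(v)` and of the form `σ(φ(v₂))` is alternating, hence not in
the orbit closure of the Thue–Morse word. -/
theorem parity_clash {u w v v₂ : ℕ → Bool} (he : ∀ k, w (2 * k) = w k)
    (ho : ∀ k, w (2 * k + 1) = !(w k)) (hu : InOrbitClosure u w)
    (h : u = substInf tmMorph v) (h₂ : u = shift (substInf tmMorph v₂)) : False := by
  have alt : ∀ i, u (i + 1) = !(u i) := by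
    intro i
    obtain ⟨k, rfl | rfl⟩ := Nat.even_or_odd' i
    · rw [h, substInf_even, substInf_odd]
    · rw [h₂]
      simp only [shift]
      rw [show 2 * k + 1 + 1 + 1 = 2 * (k + 1) + 1 by ring,
        show 2 * k + 1 + 1 = 2 * (k + 1) by ring, substInf_even, substInf_odd]
  obtain ⟨m, hm⟩ := hu 5
  rw [seg_eq_iff] at hm
  simp only [Nat.zero_add] at hm
  refine no_alternating he ho m fun i hi => ?_
  rw [Nat.add_assoc, ← hm i (by omega), ← hm (i + 1) (by omega), alt]

theorem substInf_tm_injective {v v₂ : ℕ → Bool}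
    (h : substInf tmMorph v = substInf tmMorph v₂) : v = v₂ := by
  funext k
  rw [← substInf_even v, ← substInf_even v₂, h]

/-- Each letter of `v` is the complement of the second letter of its block, and erasing the first
letter of `φ(v)` keeps all of these. -/
theorem shift_substInf_tm_injective {v v₂ : ℕ → Bool}
    (h : shift (substInf tmMorph v) = shift (substInf tmMorph v₂)) : v = v₂ := by
  funext k
  have := congrFun h (2 * k)
  simpa [shift, substInf_odd] using this

/-- Let `w` be the Thue–Morse word (the fixed point of `tmMorph`
starting with `a`) and `L_tm` its orbit closure.  Then every `u ∈ L_tm` has a unique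
representation `u = σᵖ(φ_tm(v))` with `v ∈ L_tm` and `p ∈ {0,1}`. -/
theorem thueMorse_typable (w : ℕ → Bool) (h0 : w 0 = false)
    (hfp : substInf tmMorph w = w) :
    ∀ u : ℕ → Bool, InOrbitClosure u w →
      ∃! vp : (ℕ → Bool) × ℕ, vp.2 < 2 ∧ InOrbitClosure vp.1 w ∧
        u = shift^[vp.2] (substInf tmMorph vp.1) := by
  intro u hu
  have he : ∀ k, w (2 * k) = w k := fun k => by
    conv_lhs => rw [← hfp, substInf_even]
  have ho : ∀ k, w (2 * k + 1) = !(w k) := fun k => by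
    conv_lhs => rw [← hfp, substInf_odd]
  apply existsUnique_of_exists_of_unique
  · obtain ⟨p, hp, hk⟩ := exists_parity hu
    interval_cases p
    · refine ⟨(fun i => u (2 * i), 0), by simp, ?_, ?_⟩
      · intro n
        obtain ⟨k, hk⟩ := hk (2 * n)
        refine ⟨k, seg_eq_iff.2 fun i hi => ?_⟩
        simp only [Nat.zero_add]
        rw [hk _ (by omega), show 2 * k + 0 + 2 * i = 2 * (k + i) by ring, he]
      · funext n
        simp only [Function.iterate_zero, id]
        obtain ⟨j, rfl | rfl⟩ := Nat.even_or_odd' n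
        · rw [substInf_even]
        · rw [substInf_odd]
          obtain ⟨k, hk⟩ := hk (2 * j + 2)
          rw [hk _ (by omega), hk _ (by omega),
            show 2 * k + 0 + (2 * j + 1) = 2 * (k + j) + 1 by ring,
            show 2 * k + 0 + 2 * j = 2 * (k + j) by ring, ho, he]
    · -- Here `u i` sits at position `i + 1` of `φ(v)`, so `v i` is the complement of `u (2i)`.
      refine ⟨(fun i => !(u (2 * i)), 1), by simp, ?_, ?_⟩
      · intro n
        obtain ⟨k, hk⟩ := hk (2 * n)
        refine ⟨k, seg_eq_iff.2 fun i hi => ?_⟩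
        simp only [Nat.zero_add]
        rw [hk _ (by omega), show 2 * k + 1 + 2 * i = 2 * (k + i) + 1 by ring, ho, Bool.not_not]
      · funext n
        simp only [Function.iterate_one, shift]
        obtain ⟨j, rfl | rfl⟩ := Nat.even_or_odd' n
        · rw [substInf_odd, Bool.not_not]
        · rw [show 2 * j + 1 + 1 = 2 * (j + 1) by ring, substInf_even]
          obtain ⟨k, hk⟩ := hk (2 * j + 3)
          rw [hk _ (by omega), hk _ (by omega),
            show 2 * k + 1 + (2 * j + 1) = 2 * (k + j + 1) by ring,
            show 2 * k + 1 + 2 * (j + 1) = 2 * (k + j + 1) + 1 by ring, ho, he, Bool.not_not]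
  · rintro ⟨v, p⟩ ⟨v₂, p₂⟩ ⟨hp, -, h⟩ ⟨hp₂, -, h₂⟩
    simp only at hp hp₂ h h₂
    interval_cases p <;> interval_cases p₂ <;>
      simp only [Function.iterate_one, Function.iterate_zero, id] at h h₂
    · rw [substInf_tm_injective (h.symm.trans h₂)]
    · exact (parity_clash he ho hu h h₂).elim
    · exact (parity_clash he ho hu h₂ h).elim
    · rw [shift_substInf_tm_injective (h.symm.trans h₂)]
end

section
/- Let (x_n)_{n≥0} and (y_n)_{n≥0} be sequences in [0,1] such that for all n, m: x_n < x_m if and only if y_n < y_m. If both sequences are equidistributed on [0,1], then x_n = y_n for all n. Moreover, under these hypotheses each element is the asymptotic fraction of elements smaller than it: x_n = lim_{N→∞} #{k < N : x_k < x_n}/N for every n. -/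
/-- The count over `[0, a)` is the count over `[0, a]` minus the count over the degenerate
interval `[a, a]`, and the latter has density `a - a = 0`. -/
lemma Equidistributed.tendsto_card_lt {x : ℕ → ℝ} (hx01 : ∀ n, x n ∈ Set.Icc (0 : ℝ) 1)
    (hx : Equidistributed x) {a : ℝ} (ha : a ∈ Set.Icc (0 : ℝ) 1) :
    Filter.Tendsto
      (fun N : ℕ => (((Finset.range N).filter fun k => x k < a).card : ℝ) / N)
      Filter.atTop (nhds a) := by
  have h := (hx 0 a le_rfl ha.1 ha.2).sub (hx a a ha.1 le_rfl ha.2)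
  rw [sub_self, sub_zero, sub_zero] at h
  refine h.congr fun N => ?_
  have hcard : ((Finset.range N).filter fun k => 0 ≤ x k ∧ x k ≤ a).card =
      ((Finset.range N).filter fun k => x k < a).card +
        ((Finset.range N).filter fun k => a ≤ x k ∧ x k ≤ a).card := by
    rw [← Finset.card_union_of_disjoint]
    · congr 1
      ext k
      have := (hx01 k).1
      simp only [Finset.mem_union, Finset.mem_filter]
      grind
    · rw [Finset.disjoint_filter]
      intro k _ h1 h2
      linarith [h2.1]
  rw [hcard]
  push_cast
  ring

/-- If two sequences in `[0,1]` have the same order of elements and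
both are equidistributed on `[0,1]`, then they coincide; moreover each element is the
asymptotic fraction of elements smaller than it. -/
theorem equidistributed_unique (x y : ℕ → ℝ)
    (hx01 : ∀ n, x n ∈ Set.Icc (0 : ℝ) 1) (hy01 : ∀ n, y n ∈ Set.Icc (0 : ℝ) 1)
    (horder : ∀ n m, x n < x m ↔ y n < y m)
    (hx : Equidistributed x) (hy : Equidistributed y) :
    (∀ n, x n = y n) ∧
    ∀ n, Filter.Tendsto
        (fun N : ℕ => (((Finset.range N).filter fun k => x k < x n).card : ℝ) / N)
        Filter.atTop (nhds (x n)) := by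
  refine ⟨fun n => ?_, fun n => hx.tendsto_card_lt hx01 (hx01 n)⟩
  refine tendsto_nhds_unique (hx.tendsto_card_lt hx01 (hx01 n)) ?_
  simp only [horder]
  exact hy.tendsto_card_lt hy01 (hy01 n)
end

section
/- Let φ_tm be the Thue–Morse morphism (φ_tm(a) = ab, φ_tm(b) = ba, with a < b), w_tm its infinite fixed point starting with a, and L_tm the orbit closure of w_tm. Let μ be the unique shift-invariant Borel probability measure on L_tm (i.e., μ is shift-invariant and every shift-invariant Borel probability measure on L_tm equals μ). For n ≥ 0, define ν[n] = μ{u ∈ L_tm : u ≤ σ^n(w_tm)}, where ≤ is the lexicographic order. Then ν[0] = 1/2, and for every n ≥ 0: ν[2n] = ν[n]/2 + 1/4; if w_tm[n] = a then ν[2n+1] = ν[n]/2 + 3/4; and if w_tm[n] = b then ν[2n+1] = ν[n]/2 − 1/4. -/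
open MeasureTheory

/-! ### The morphism and the orbit closure -/

/-- The Thue–Morse morphism on infinite words, given letter by letter. -/
def tm (u : ℕ → Bool) : ℕ → Bool := fun n => if n % 2 = 0 then u (n / 2) else !u (n / 2)

lemma tm_even (u : ℕ → Bool) (n : ℕ) : tm u (2 * n) = u n := by
  simp [tm]

lemma tm_odd (u : ℕ → Bool) (n : ℕ) : tm u (2 * n + 1) = !u n := by
  have h : (2 * n + 1) / 2 = n := by omega
  simp [tm, h, Nat.add_mod]

lemma getD_flatMap_tmMorph (d : Bool) (l : ℕ) : ∀ (f : ℕ → Bool) (n : ℕ), n < 2 * l →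
    (((List.range l).map f).flatMap tmMorph).getD n d = tm f n := by
  induction l with
  | zero => intro f n hn; omega
  | succ l ih =>
    intro f n hn
    rw [List.range_succ_eq_map]
    simp only [List.map_cons, List.map_map, List.flatMap_cons]
    rcases n with _ | _ | n
    · simp [tmMorph, tm]
    · simp [tmMorph, tm]
    · have h := ih (f ∘ Nat.succ) n (by omega)
      have h2 : (n + 1 + 1) / 2 = n / 2 + 1 := by omega
      have h3 : (n + 1 + 1) % 2 = n % 2 := by omega
      have h4 : tm f (n + 1 + 1) = tm (f ∘ Nat.succ) n := by simp [tm, h2, h3]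
      rw [h4, ← h]
      simp [tmMorph]

lemma substInf_tmMorph (w : ℕ → Bool) : substInf tmMorph w = tm w := by
  funext n
  simp only [substInf, substList, seg, Nat.zero_add]
  exact getD_flatMap_tmMorph _ _ _ _ (by omega)

lemma shift_shift_tm (u : ℕ → Bool) : shift (shift (tm u)) = tm (shift u) := by
  funext n
  have h2 : (n + 1 + 1) / 2 = n / 2 + 1 := by omega
  have h3 : (n + 1 + 1) % 2 = n % 2 := by omega
  simp [shift, tm, h2, h3]

lemma iterate_shift_apply (w : ℕ → Bool) (n k : ℕ) : (shift^[n] w) k = w (n + k) := by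
  induction n generalizing k with
  | zero => simp
  | succ n ih =>
    rw [Function.iterate_succ_apply', shift, ih]
    congr 1
    omega

lemma iterate_shift_even {w : ℕ → Bool} (hw : tm w = w) (n : ℕ) :
    shift^[2 * n] w = tm (shift^[n] w) := by
  induction n with
  | zero => simp [hw]
  | succ n ih =>
    rw [show 2 * (n + 1) = 2 * n + 1 + 1 by ring, Function.iterate_succ_apply',
      Function.iterate_succ_apply', ih, shift_shift_tm, Function.iterate_succ_apply']

lemma iterate_shift_odd {w : ℕ → Bool} (hw : tm w = w) (n : ℕ) :
    shift^[2 * n + 1] w = shift (tm (shift^[n] w)) := by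
  rw [Function.iterate_succ_apply', iterate_shift_even hw]

lemma inOrbitClosure_iff (z w : ℕ → Bool) :
    InOrbitClosure z w ↔ ∀ n, ∃ m, ∀ k < n, z k = w (m + k) := by
  simp [InOrbitClosure, seg]

lemma InOrbitClosure.shift {z w : ℕ → Bool} (h : InOrbitClosure z w) :
    InOrbitClosure (shift z) w := by
  rw [inOrbitClosure_iff] at h ⊢
  intro n
  obtain ⟨m, hm⟩ := h (n + 1)
  refine ⟨m + 1, fun k hk => ?_⟩
  rw [_root_.shift, hm (k + 1) (by omega)]
  congr 1
  omega

lemma inOrbitClosure_iterate_shift (w : ℕ → Bool) (n : ℕ) :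
    InOrbitClosure (shift^[n] w) w := by
  rw [inOrbitClosure_iff]
  exact fun _ => ⟨n, fun k _ => iterate_shift_apply w n k⟩

lemma InOrbitClosure.tm {z w : ℕ → Bool} (hw : tm w = w) (h : InOrbitClosure z w) :
    InOrbitClosure (tm z) w := by
  rw [inOrbitClosure_iff] at h ⊢
  intro n
  obtain ⟨m, hm⟩ := h n
  refine ⟨2 * m, fun k hk => ?_⟩
  have h1 : (2 * m + k) / 2 = m + k / 2 := by omega
  have h2 : (2 * m + k) % 2 = k % 2 := by omega
  rw [← hw]
  simp only [_root_.tm, h1, h2, hm (k / 2) (by omega)]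

/-- Three consecutive letters of the Thue–Morse word contain an aligned block `c, !c`, so no word of
the orbit closure starts with three equal letters. -/
lemma InOrbitClosure.no_cube {z w : ℕ → Bool} (hw : _root_.tm w = w) (h : InOrbitClosure z w) :
    ¬ (z 0 = z 1 ∧ z 1 = z 2) := by
  rw [inOrbitClosure_iff] at h
  obtain ⟨m, hm⟩ := h 3
  rw [hm 0 (by omega), hm 1 (by omega), hm 2 (by omega)]
  have hblock : ∀ j, w (2 * j + 1) = !w (2 * j) := fun j => by
    rw [← hw, tm_odd, tm_even]
  rintro ⟨h1, h2⟩
  rcases Nat.even_or_odd' m with ⟨j, rfl | rfl⟩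
  · have h3 := hblock j
    rw [← h1] at h3
    simp at h3
  · have h3 := hblock (j + 1)
    rw [show 2 * (j + 1) = 2 * j + 1 + 1 by ring, h2] at h3
    simp at h3

/-! ### Lexicographic comparison -/

lemma lexLt_or_eq_or_lexLt (u v : ℕ → Bool) : lexLt u v ∨ u = v ∨ lexLt v u := by
  classical
  by_cases h : u = v
  · exact Or.inr (Or.inl h)
  have hne : ∃ n, u n ≠ v n := Function.ne_iff.mp h
  have hmin : ∀ k < Nat.find hne, u k = v k := fun k hk => not_not.mp (Nat.find_min hne hk)
  rcases lt_or_gt_of_ne (Nat.find_spec hne) with h | h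
  · exact Or.inl ⟨_, hmin, h⟩
  · exact Or.inr (Or.inr ⟨_, fun k hk => (hmin k hk).symm, h⟩)

lemma lexLt.not_lexLe {u v : ℕ → Bool} (h : lexLt u v) : ¬ lexLe v u := by
  obtain ⟨n, hn, hlt⟩ := h
  rintro (⟨m, hm, hlt'⟩ | rfl)
  · rcases lt_trichotomy n m with h | rfl | h
    · exact absurd (hm n h) hlt.ne'
    · exact lt_asymm hlt hlt'
    · exact absurd (hn m h) hlt'.ne'
  · exact lt_irrefl _ hlt

lemma lexLt_of_head {u v : ℕ → Bool} (hu : u 0 = false) (hv : v 0 = true) : lexLt u v :=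
  ⟨0, by simp, by simp [hu, hv]⟩

lemma lexLt.tm {u x : ℕ → Bool} (h : lexLt u x) : lexLt (tm u) (tm x) := by
  obtain ⟨n, hn, hlt⟩ := h
  refine ⟨2 * n, fun k hk => ?_, by rwa [tm_even, tm_even]⟩
  simp only [_root_.tm, hn (k / 2) (by omega)]

/-- The first difference of `u` and `x` at position `n + 1` shows up in `shift (tm u)` and
`shift (tm x)` at position `2 * n + 1`. -/
lemma lexLt.shift_tm {u x : ℕ → Bool} (h0 : u 0 = x 0) (h : lexLt u x) :
    lexLt (shift (_root_.tm u)) (shift (_root_.tm x)) := by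
  obtain ⟨n, hn, hlt⟩ := h
  rcases n with _ | n
  · exact absurd h0 hlt.ne
  refine ⟨2 * n + 1, fun k hk => ?_, ?_⟩
  · simp only [shift, _root_.tm, hn ((k + 1) / 2) (by omega)]
  · simp only [shift]
    rw [show 2 * n + 1 + 1 = 2 * (n + 1) by ring, tm_even, tm_even]
    exact hlt

lemma tm_le_tm_iff (u x : ℕ → Bool) : lexLe (tm u) (tm x) ↔ lexLe u x := by
  rcases lexLt_or_eq_or_lexLt u x with h | rfl | h
  · exact iff_of_true (Or.inl h.tm) (Or.inl h)
  · exact iff_of_true (Or.inr rfl) (Or.inr rfl)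
  · exact iff_of_false h.tm.not_lexLe h.not_lexLe

lemma shift_tm_le_shift_tm_iff {u x : ℕ → Bool} (h0 : u 0 = x 0) :
    lexLe (shift (tm u)) (shift (tm x)) ↔ lexLe u x := by
  rcases lexLt_or_eq_or_lexLt u x with h | rfl | h
  · exact iff_of_true (Or.inl (h.shift_tm h0)) (Or.inl h)
  · exact iff_of_true (Or.inr rfl) (Or.inr rfl)
  · exact iff_of_false (h.shift_tm h0.symm).not_lexLe h.not_lexLe

/-- If `u` starts with `b` but not with `bbb`, then `shift (tm u)` starts with `aa` or `abaa`, and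
so lies below every word `tm x`. -/
lemma shift_tm_lt {u : ℕ → Bool} (hu : ¬ (u 0 = u 1 ∧ u 1 = u 2)) (h0 : u 0 = true)
    (x : ℕ → Bool) : lexLt (shift (tm u)) (tm x) := by
  cases hx0 : x 0
  · cases hu1 : u 1
    · refine ⟨1, fun k hk => ?_, ?_⟩
      · interval_cases k
        simp [shift, tm, h0, hx0]
      · simp [shift, tm, hu1, hx0]
    · have hu2 : u 2 = false := by simp_all
      cases hx1 : x 1
      · refine ⟨3, fun k hk => ?_, ?_⟩
        · interval_cases k <;> simp [shift, tm, h0, hx0, hu1, hx1]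
        · simp [shift, tm, hu2, hx1]
      · refine ⟨2, fun k hk => ?_, ?_⟩
        · interval_cases k <;> simp [shift, tm, h0, hx0, hu1]
        · simp [shift, tm, hu1, hx1]
  · exact lexLt_of_head (by simp [shift, tm, h0]) (by simp [tm, hx0])

/-- If `u` starts with `a` but not with `aaa`, then `shift (tm u)` starts with `bb` or `babb`, and
so lies above every word `tm x`. -/
lemma lt_shift_tm {u : ℕ → Bool} (hu : ¬ (u 0 = u 1 ∧ u 1 = u 2)) (h0 : u 0 = false)
    (x : ℕ → Bool) : lexLt (tm x) (shift (tm u)) := by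
  cases hx0 : x 0
  · exact lexLt_of_head (by simp [tm, hx0]) (by simp [shift, tm, h0])
  · cases hu1 : u 1
    · have hu2 : u 2 = true := by simp_all
      cases hx1 : x 1
      · refine ⟨2, fun k hk => ?_, ?_⟩
        · interval_cases k <;> simp [shift, tm, h0, hx0, hu1]
        · simp [shift, tm, hu1, hx1]
      · refine ⟨3, fun k hk => ?_, ?_⟩
        · interval_cases k <;> simp [shift, tm, h0, hx0, hu1, hx1]
        · simp [shift, tm, hu2, hx1]
    · refine ⟨1, fun k hk => ?_, ?_⟩
      · interval_cases k
        simp [shift, tm, h0, hx0]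
      · simp [shift, tm, hu1, hx0]

/-! ### Measurability -/

lemma measurable_shift : Measurable (shift : (ℕ → Bool) → ℕ → Bool) :=
  measurable_pi_lambda _ fun n => measurable_pi_apply (n + 1)

lemma measurable_tm : Measurable tm := by
  refine measurable_pi_lambda _ fun n => ?_
  by_cases h : n % 2 = 0
  · simpa only [tm, h, if_true] using measurable_pi_apply (n / 2)
  · simp only [tm, h, if_false]
    exact (measurable_of_countable Bool.not).comp (measurable_pi_apply (n / 2))

lemma measurableSet_letter (k : ℕ) (c : Bool) : MeasurableSet {u : ℕ → Bool | u k = c} :=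
  measurableSet_eq_fun (measurable_pi_apply k) measurable_const

lemma measurableSet_orbitClosure (w : ℕ → Bool) : MeasurableSet {z | InOrbitClosure z w} := by
  simp only [inOrbitClosure_iff, Set.ofPred_forall, Set.ofPred_exists]
  exact MeasurableSet.iInter fun n => MeasurableSet.iUnion fun m => MeasurableSet.iInter fun k =>
    MeasurableSet.iInter fun _ => measurableSet_letter k _

lemma measurableSet_lexLe (v : ℕ → Bool) : MeasurableSet {u | lexLe u v} := by
  have hlt : MeasurableSet {u | lexLt u v} := by
    simp only [lexLt, Set.ofPred_exists, Set.ofPred_and, Set.ofPred_forall]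
    exact MeasurableSet.iUnion fun n => (MeasurableSet.iInter fun k =>
      MeasurableSet.iInter fun _ => measurableSet_letter k _).inter
        ((MeasurableSet.of_discrete (s := {c | c < v n})).preimage (measurable_pi_apply n))
  exact hlt.union (measurableSet_singleton v)

/-! ### Self-similarity of the invariant measure -/

/-- By uniqueness, `μ` is the mean of its images under `tm` and `shift ∘ tm`. -/
lemma measure_split {w : ℕ → Bool} (hw : tm w = w) (μ : Measure (ℕ → Bool))
    [IsProbabilityMeasure μ] (hL : ∀ᵐ u ∂μ, InOrbitClosure u w)
    (hinv : ∀ s : Set (ℕ → Bool), MeasurableSet s → μ (shift ⁻¹' s) = μ s)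
    (huniq : ∀ μ' : Measure (ℕ → Bool), IsProbabilityMeasure μ' →
        μ' {z | InOrbitClosure z w} = 1 →
        (∀ s : Set (ℕ → Bool), MeasurableSet s → μ' (shift ⁻¹' s) = μ' s) → μ' = μ)
    {A : Set (ℕ → Bool)} (hA : MeasurableSet A) :
    μ.real A = (μ.real {u | tm u ∈ A} + μ.real {u | shift (tm u) ∈ A}) / 2 := by
  have hst : Measurable fun u => shift (tm u) := measurable_shift.comp measurable_tm
  have key : ∀ s, MeasurableSet s → ((2 : ENNReal)⁻¹ • (μ.map tm + μ.map fun u => shift (tm u))) s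
      = 2⁻¹ * (μ {u | tm u ∈ s} + μ {u | shift (tm u) ∈ s}) := by
    intro s hs
    simp only [Measure.smul_apply, Measure.add_apply, Measure.map_apply measurable_tm hs,
      Measure.map_apply hst hs, smul_eq_mul]
    rfl
  have half : (2 : ENNReal)⁻¹ * (1 + 1) = 1 := by
    rw [one_add_one_eq_two]
    exact ENNReal.inv_mul_cancel (by simp) (by simp)
  have hμ := huniq _ ⟨by rw [key _ MeasurableSet.univ]; simpa using half⟩ (by
    rw [key _ (measurableSet_orbitClosure w)]
    have h1 : μ {u | tm u ∈ {z | InOrbitClosure z w}} = 1 := by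
      refine (prob_compl_eq_zero_iff (measurable_tm (measurableSet_orbitClosure w))).mp ?_
      exact hL.mono fun u hu => hu.tm hw
    have h2 : μ {u | shift (tm u) ∈ {z | InOrbitClosure z w}} = 1 := by
      refine (prob_compl_eq_zero_iff (hst (measurableSet_orbitClosure w))).mp ?_
      exact hL.mono fun u hu => (hu.tm hw).shift
    rw [h1, h2, half]) (by
    intro s hs
    rw [key _ hs, key _ (measurable_shift hs)]
    -- The shift exchanges the two images, using `shift ∘ shift ∘ tm = tm ∘ shift` and invariance.
    have h : μ {u | shift (tm u) ∈ shift ⁻¹' s} = μ {u | tm u ∈ s} := by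
      rw [← hinv _ (show MeasurableSet {u | tm u ∈ s} from measurable_tm hs)]
      simp only [Set.mem_preimage, shift_shift_tm]
      rfl
    rw [h, add_comm]
    rfl)
  have := key A hA
  rw [hμ] at this
  rw [Measure.real, this, ENNReal.toReal_mul, ENNReal.toReal_add (measure_ne_top _ _)
    (measure_ne_top _ _)]
  simp only [Measure.real, ENNReal.toReal_inv, ENNReal.toReal_ofNat]
  ring

lemma measure_letter {μ : Measure (ℕ → Bool)} [IsProbabilityMeasure μ]
    (hsplit : ∀ A, MeasurableSet A →
      μ.real A = (μ.real {u | tm u ∈ A} + μ.real {u | shift (tm u) ∈ A}) / 2) (c : Bool) :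
    μ.real {u | u 0 = c} = 1 / 2 := by
  have h := hsplit _ (measurableSet_letter 0 c)
  have h1 : {u : ℕ → Bool | tm u ∈ {u : ℕ → Bool | u 0 = c}} = {u | u 0 = c} := by
    ext u; simp [tm]
  have h2 : {u : ℕ → Bool | shift (tm u) ∈ {u : ℕ → Bool | u 0 = c}} = {u | u 0 = c}ᶜ := by
    ext u; cases c <;> simp [tm, shift]
  rw [h1, h2, probReal_compl_eq_one_sub (measurableSet_letter 0 c)] at h
  linarith

/-- Let `w` be the Thue–Morse word, `L_tm` its orbit closure, and
`μ` the unique shift-invariant Borel probability measure on `L_tm` (formalized as a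
probability measure on `{a,b}^ℕ` giving full mass to `L_tm`).  Setting
`ν[n] = μ{u ∈ L_tm : u ≤ σⁿ(w)}`, we have `ν[0] = 1/2`, and for all `n`:
`ν[2n] = ν[n]/2 + 1/4`; if `w[n] = a` then `ν[2n+1] = ν[n]/2 + 3/4`; and if
`w[n] = b` then `ν[2n+1] = ν[n]/2 − 1/4`. -/
theorem thueMorse_nu_recurrence (w : ℕ → Bool) (h0 : w 0 = false)
    (hfp : substInf tmMorph w = w)
    (μ : Measure (ℕ → Bool)) (hprob : IsProbabilityMeasure μ)
    (hsupp : μ {z | InOrbitClosure z w} = 1)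
    (hinv : ∀ s : Set (ℕ → Bool), MeasurableSet s → μ (shift ⁻¹' s) = μ s)
    (huniq : ∀ μ' : Measure (ℕ → Bool), IsProbabilityMeasure μ' →
        μ' {z | InOrbitClosure z w} = 1 →
        (∀ s : Set (ℕ → Bool), MeasurableSet s → μ' (shift ⁻¹' s) = μ' s) → μ' = μ)
    (ν : ℕ → ℝ)
    (hν : ∀ n, ν n = (μ {u | InOrbitClosure u w ∧ lexLe u (shift^[n] w)}).toReal) :
    ν 0 = 1 / 2 ∧
    ∀ n : ℕ,
      ν (2 * n) = ν n / 2 + 1 / 4 ∧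
      (w n = false → ν (2 * n + 1) = ν n / 2 + 3 / 4) ∧
      (w n = true → ν (2 * n + 1) = ν n / 2 - 1 / 4) := by
  have hw : tm w = w := by rw [← substInf_tmMorph, hfp]
  have hL : ∀ᵐ u ∂μ, InOrbitClosure u w :=
    (prob_compl_eq_zero_iff (measurableSet_orbitClosure w)).mpr hsupp
  have hsplit := fun A (hA : MeasurableSet A) => measure_split hw μ hL hinv huniq hA
  have hletter := measure_letter hsplit
  have hν' : ∀ n, ν n = μ.real {u | lexLe u (shift^[n] w)} := by
    intro n
    rw [hν]
    refine measureReal_congr ?_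
    filter_upwards [hL] with u hu
    exact propext (and_iff_right hu)
  have hxL : ∀ n, ¬ _ := fun n => (inOrbitClosure_iterate_shift w n).no_cube hw
  have hx0 : ∀ n, (shift^[n] w) 0 = w n := fun n => iterate_shift_apply w n 0
  have heven : ∀ n, ν (2 * n) = ν n / 2 + 1 / 4 := by
    intro n
    have h1 : {u | tm u ∈ {u | lexLe u (tm (shift^[n] w))}} = {u | lexLe u (shift^[n] w)} := by
      ext u
      exact tm_le_tm_iff _ _
    have h2 : μ.real {u | shift (tm u) ∈ {u | lexLe u (tm (shift^[n] w))}} = 1 / 2 := by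
      rw [← hletter true]
      refine measureReal_congr ?_
      filter_upwards [hL] with u hu
      refine propext (?_ : lexLe _ _ ↔ u 0 = true)
      cases hu0 : u 0
      · exact iff_of_false (lt_shift_tm (hu.no_cube hw) hu0 _).not_lexLe (by simp)
      · exact iff_of_true (Or.inl (shift_tm_lt (hu.no_cube hw) hu0 _)) rfl
    rw [hν', hν', iterate_shift_even hw, hsplit _ (measurableSet_lexLe _), h1, h2]
    ring
  refine ⟨by linarith [heven 0], fun n => ⟨heven n, fun hn => ?_, fun hn => ?_⟩⟩
  · have hxn := (hx0 n).trans hn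
    have h1 : {u | tm u ∈ {u | lexLe u (shift (tm (shift^[n] w)))}} = Set.univ :=
      Set.eq_univ_of_forall fun u => Or.inl (lt_shift_tm (hxL n) hxn u)
    have h2 : {u | shift (tm u) ∈ {u | lexLe u (shift (tm (shift^[n] w)))}}
        = {u | u 0 = true} ∪ {u | lexLe u (shift^[n] w)} := by
      ext u
      change lexLe _ _ ↔ u 0 = true ∨ lexLe _ _
      cases hu0 : u 0
      · rw [shift_tm_le_shift_tm_iff (hu0.trans hxn.symm)]
        simp
      · exact iff_of_true
          (Or.inl (lexLt_of_head (by simp [shift, tm, hu0]) (by simp [shift, tm, hxn])))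
          (Or.inl rfl)
    have hdisj : Disjoint {u : ℕ → Bool | u 0 = true} {u | lexLe u (shift^[n] w)} :=
      Set.disjoint_left.mpr fun u hu => (lexLt_of_head hxn hu).not_lexLe
    rw [hν', hν', iterate_shift_odd hw, hsplit _ (measurableSet_lexLe _), h1, h2,
      measureReal_union hdisj (measurableSet_lexLe _), hletter, probReal_univ]
    ring
  · have hxn := (hx0 n).trans hn
    have h1 : {u | tm u ∈ {u | lexLe u (shift (tm (shift^[n] w)))}} = ∅ :=
      Set.eq_empty_of_forall_notMem fun u => (shift_tm_lt (hxL n) hxn u).not_lexLe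
    have h2 : {u | shift (tm u) ∈ {u | lexLe u (shift (tm (shift^[n] w)))}}
        = {u | lexLe u (shift^[n] w)} \ {u | u 0 = false} := by
      ext u
      change lexLe _ _ ↔ lexLe _ _ ∧ ¬ u 0 = false
      cases hu0 : u 0
      · exact iff_of_false
          (lexLt_of_head (by simp [shift, tm, hxn]) (by simp [shift, tm, hu0])).not_lexLe (by simp)
      · rw [shift_tm_le_shift_tm_iff (hu0.trans hxn.symm)]
        simp
    have hsub : {u : ℕ → Bool | u 0 = false} ⊆ {u | lexLe u (shift^[n] w)} :=
      fun u hu => Or.inl (lexLt_of_head hu hxn)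
    rw [hν', hν', iterate_shift_odd hw, hsplit _ (measurableSet_lexLe _), h1, h2,
      measureReal_sdiff hsub (measurableSet_letter 0 false), hletter, measureReal_empty]
    ring
end

section
/- Let φ_tm be the Thue–Morse morphism (φ_tm(a) = ab, φ_tm(b) = ba, with a < b), w_tm its infinite fixed point starting with a, and L_tm the orbit closure of w_tm. Then w_tm is the lexicographically greatest element of the set {z ∈ L_tm : z[0] = a}, and σ(w_tm) is the lexicographically greatest element of L_tm. -/
lemma substList_tm_even (l : List Bool) (k : ℕ) :
    (substList tmMorph l)[2 * k]? = l[k]? := by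
  induction l generalizing k with
  | nil => simp [substList]
  | cons c l ih =>
    cases k with
    | zero => simp [substList, tmMorph]
    | succ k => simpa [substList, tmMorph, Nat.mul_succ] using ih k

lemma substList_tm_odd (l : List Bool) (k : ℕ) :
    (substList tmMorph l)[2 * k + 1]? = l[k]?.map (!·) := by
  induction l generalizing k with
  | nil => simp [substList]
  | cons c l ih =>
    cases k with
    | zero => simp [substList, tmMorph]
    | succ k => simpa [substList, tmMorph, Nat.mul_succ] using ih k

lemma seg_getElem? {α : Type*} (w : ℕ → α) (i l k : ℕ) (h : k < l) :
    (seg w i l)[k]? = some (w (i + k)) := by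
  simp [seg, h]

lemma tm_even_s18 {w : ℕ → Bool} (hfp : substInf tmMorph w = w) (n : ℕ) : w (2 * n) = w n := by
  conv_lhs => rw [← hfp]
  simp [substInf, List.getD_eq_getElem?_getD, substList_tm_even,
    seg_getElem? w 0 (2 * n + 1) n (by omega)]

lemma tm_odd_s18 {w : ℕ → Bool} (hfp : substInf tmMorph w = w) (n : ℕ) :
    w (2 * n + 1) = !w n := by
  conv_lhs => rw [← hfp]
  simp [substInf, List.getD_eq_getElem?_getD, substList_tm_odd,
    seg_getElem? w 0 (2 * n + 1 + 1) n (by omega)]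

/-- No suffix of the Thue–Morse word starting with `a` is greater than the word itself: it cannot
have `b` against `a` at the first position `n` of disagreement. -/
lemma tm_no_greater {w : ℕ → Bool} (h0 : w 0 = false) (he : ∀ n, w (2 * n) = w n)
    (ho : ∀ n, w (2 * n + 1) = !w n) (n : ℕ) :
    ∀ m, w m = false → (∀ k < n, w (m + k) = w k) → w n = false → w (m + n) = false := by
  induction n using Nat.strong_induction_on with
  | _ n ih =>
    intro m hm hk hn
    have w1 : w 1 = true := by simpa [h0] using ho 0
    have w2 : w 2 = true := by simpa [w1] using he 1
    rcases Nat.even_or_odd' m with ⟨m', rfl | rfl⟩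
    · rcases Nat.even_or_odd' n with ⟨n', rfl | rfl⟩
      · rcases Nat.eq_zero_or_pos n' with rfl | hpos
        · simpa using hm
        · have := ih n' (by omega) m' (by rwa [he] at hm)
            (fun k hkn => by
              have := hk (2 * k) (by omega)
              rwa [← mul_add, he, he] at this)
            (by rwa [he] at hn)
          rwa [← mul_add, he]
      · have h := hk (2 * n') (by omega)
        rw [← mul_add, he, he] at h
        rw [← add_assoc, ← mul_add, ho, h, ← ho, hn]
    · have hn3 : 3 ≤ n ∨ n = 0 := by
        by_contra hcon
        have : n = 1 ∨ n = 2 := by omega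
        rcases this with rfl | rfl <;> simp_all
      rcases hn3 with hn3 | rfl
      · have h1 := hk 1 (by omega)
        have h2 := hk 2 (by omega)
        rw [show 2 * m' + 1 + 1 = 2 * (m' + 1) by ring, he, w1] at h1
        rw [show 2 * m' + 1 + 2 = 2 * (m' + 1) + 1 by ring, ho, w2, h1] at h2
        simp at h2
      · simpa using hm

/-- No suffix of the Thue–Morse word is greater than its shift. -/
lemma tm_no_greater_shift {w : ℕ → Bool} (h0 : w 0 = false) (he : ∀ n, w (2 * n) = w n)
    (ho : ∀ n, w (2 * n + 1) = !w n) (n m : ℕ)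
    (hk : ∀ k < n, w (m + k) = w (k + 1)) (hn : w (n + 1) = false) : w (m + n) = false := by
  have w1 : w 1 = true := by simpa [h0] using ho 0
  have w2 : w 2 = true := by simpa [w1] using he 1
  have hn2 : 2 ≤ n := by
    by_contra hcon
    have : n = 0 ∨ n = 1 := by omega
    rcases this with rfl | rfl <;> simp_all
  have hm0 : w m = true := by simpa [w1] using hk 0 (by omega)
  have hm1 : w (m + 1) = true := by simpa [w2] using hk 1 (by omega)
  rcases m with _ | m
  · simp [h0] at hm0
  · have hm : w m = false := by
      -- otherwise `bbb` occurs at `m`, and it contains an aligned block `bb`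
      by_contra hcon
      rcases Nat.even_or_odd' m with ⟨m', rfl | rfl⟩
      · rw [ho] at hm0
        rw [he] at hcon
        simp_all
      · rw [show 2 * m' + 1 + 1 + 1 = 2 * (m' + 1) + 1 by ring, ho] at hm1
        rw [show 2 * m' + 1 + 1 = 2 * (m' + 1) by ring, he] at hm0
        simp [hm0] at hm1
    have := tm_no_greater h0 he ho (n + 1) m hm
      (fun k hkn => by
        cases k with
        | zero => simpa [h0] using hm
        | succ k => rw [← hk k (by omega)]; congr 1; ring) hn
    rwa [show m + 1 + n = m + (n + 1) by ring]

lemma InOrbitClosure.exists_agree {α : Type*} {z w : ℕ → α} (hz : InOrbitClosure z w) (n : ℕ) :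
    ∃ m, ∀ k ≤ n, z k = w (m + k) := by
  obtain ⟨m, hm⟩ := hz (n + 1)
  refine ⟨m, fun k hk => ?_⟩
  have := congrArg (·[k]?) hm
  simpa [seg_getElem? z 0 (n + 1) k (by omega), seg_getElem? w m (n + 1) k (by omega)] using this

/-- A binary word `z` that never has `b` against `a` at its first disagreement with `v` is at most
`v` lexicographically. -/
lemma lex_of_no_greater {z v : ℕ → Bool}
    (h : ∀ n, (∀ k < n, z k = v k) → v n = false → z n = false) : z = v ∨ lexLt z v := by
  classical
  by_cases hzv : z = v
  · exact Or.inl hzv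
  · have hex : ∃ n, z n ≠ v n := Function.ne_iff.mp hzv
    have hlt : ∀ k < Nat.find hex, z k = v k := fun k hk => not_not.mp (Nat.find_min hex hk)
    refine Or.inr ⟨Nat.find hex, hlt, ?_⟩
    have hne := Nat.find_spec hex
    have hh := h _ hlt
    revert hne hh
    generalize z (Nat.find hex) = x
    generalize v (Nat.find hex) = y
    revert x y
    decide

/-- The Thue–Morse word `w` is the lexicographically greatest element
of `{z ∈ L_tm : z[0] = a}`, and `σ(w)` is the lexicographically greatest element of
`L_tm`. -/
theorem thueMorse_lex_greatest (w : ℕ → Bool) (h0 : w 0 = false)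
    (hfp : substInf tmMorph w = w) :
    IsLexGreatest {z | InOrbitClosure z w ∧ z 0 = false} w ∧
    IsLexGreatest {z | InOrbitClosure z w} (shift w) := by
  have he := tm_even_s18 hfp
  have ho := tm_odd_s18 hfp
  refine ⟨⟨⟨fun n => ⟨0, rfl⟩, h0⟩, ?_⟩, ⟨fun n => ⟨1, ?_⟩, ?_⟩⟩
  · rintro z ⟨hz, hz0⟩
    refine lex_of_no_greater fun n hk hn => ?_
    obtain ⟨m, hm⟩ := hz.exists_agree n
    rw [hm n le_rfl]
    refine tm_no_greater h0 he ho n m ?_ (fun k hkn => ?_) hn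
    · rw [← hz0, hm 0 (by omega), add_zero]
    · rw [← hm k hkn.le, hk k hkn]
  · simp [seg, shift, add_comm]
  · intro z hz
    refine lex_of_no_greater fun n hk hn => ?_
    obtain ⟨m, hm⟩ := InOrbitClosure.exists_agree hz n
    rw [hm n le_rfl]
    refine tm_no_greater_shift h0 he ho n m (fun k hkn => ?_) hn
    rw [← hm k hkn.le, hk k hkn, shift]
end
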